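/- arXiv:2006.15944 — 3 statements merged into one kernel-verified Lean document; each statement's English description precedes it below -/
import Mathlib

section
/- Let u ∈ C²((0,∞)), u ≢ 0, be a solution of u'' + ((N−1)/r)u' + |u|^α u = 0 on (0,∞), and define U : ℝ^N∖{0} → ℝ by U(x) = u(|x|). Then U ∈ L^{α+1}_loc(ℝ^N) (i.e. |U|^{α+1} is integrable on every ball), and U is a distributional solution of −ΔU = |U|^α U on ℝ^N: for every φ ∈ C_c^∞(ℝ^N), ∫_{ℝ^N} ( U(x) Δφ(x) + |U(x)|^α U(x) φ(x) ) dx = 0. -/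
open MeasureTheory

noncomputable section

/-- `N`-dimensional Euclidean space. -/
abbrev Euc (N : ℕ) := EuclideanSpace ℝ (Fin N)

/-- The Laplacian of a function on `ℝ^N`, as the sum of the second partial derivatives. -/
def lapl {N : ℕ} (f : Euc N → ℝ) (x : Euc N) : ℝ :=
  ∑ i : Fin N,
    fderiv ℝ (fderiv ℝ f) x (EuclideanSpace.single i (1 : ℝ)) (EuclideanSpace.single i (1 : ℝ))

/-!
The Emden–Fowler substitution `v = r ^ (2 / α) * u` turns the radial equation into an autonomous
equation in `log r` whose energy is nondecreasing in `r` as long as `α * (N - 2) ≤ 4`. The energy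
is coercive in `v`, so `|u| ≤ C * r ^ (-2 / α)` near the origin. Since `2 / α + 2 < N`, both
`U / ‖x‖ ^ 2` and `|U| ^ (α + 1)` are then locally integrable. Cutting a test function off at scale
`1 / c` changes its second derivatives by at most a multiple of `‖x‖ ^ (-2)` that does not depend on
`c`, so Green's identity away from the origin passes to the limit `c → ∞` by dominated convergence,
and the singularity at the origin leaves no trace.
-/

open Set Filter Topology Module
open scoped Laplacian RealInnerProductSpace

section SecondDerivative

variable {E : Type*} [NormedAddCommGroup E] [NormedSpace ℝ E] {f : E → ℝ}

lemma fderiv_fderiv_apply_self {x : E} (hf : ContDiffAt ℝ 2 f x) (v : E) :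
    fderiv ℝ (fun y => fderiv ℝ f y v) x v = iteratedFDeriv ℝ 2 f x ![v, v] := by
  have hD : DifferentiableAt ℝ (fderiv ℝ f) x :=
    (hf.fderiv_right (m := 1) le_rfl).differentiableAt one_ne_zero
  simp [iteratedFDeriv_two_apply, fderiv_clm_apply hD (differentiableAt_const v)]

lemma tsupport_iteratedFDeriv_apply_subset {n : ℕ} (m : Fin n → E) :
    tsupport (fun x => iteratedFDeriv ℝ n f x m) ⊆ tsupport f := by
  refine (closure_mono fun x hx => ?_).trans (tsupport_iteratedFDeriv_subset (𝕜 := ℝ) n)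
  exact fun hD => hx (by simp [hD])

end SecondDerivative

section Laplacian

variable {E : Type*} [NormedAddCommGroup E] [InnerProductSpace ℝ E] [FiniteDimensional ℝ E]

lemma norm_laplacian_le (f : E → ℝ) (x : E) :
    ‖Δ f x‖ ≤ finrank ℝ E * ‖iteratedFDeriv ℝ 2 f x‖ := by
  rw [InnerProductSpace.laplacian_eq_iteratedFDeriv_stdOrthonormalBasis]
  calc ‖∑ i, iteratedFDeriv ℝ 2 f x ![stdOrthonormalBasis ℝ E i, stdOrthonormalBasis ℝ E i]‖
      ≤ ∑ _i : Fin (finrank ℝ E), ‖iteratedFDeriv ℝ 2 f x‖ :=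
        norm_sum_le_of_le _ fun i _ => by
          simpa using (iteratedFDeriv ℝ 2 f x).le_opNorm
            ![stdOrthonormalBasis ℝ E i, stdOrthonormalBasis ℝ E i]
    _ = finrank ℝ E * ‖iteratedFDeriv ℝ 2 f x‖ := by simp

lemma tsupport_laplacian_subset (f : E → ℝ) : tsupport (Δ f) ⊆ tsupport f := by
  refine (closure_mono fun x hx => ?_).trans (tsupport_iteratedFDeriv_subset (𝕜 := ℝ) 2)
  exact fun hD => hx (norm_le_zero_iff.mp (by simpa [hD] using norm_laplacian_le f x))

lemma continuousAt_laplacian {f : E → ℝ} {x : E} (hf : ContDiffAt ℝ 2 f x) :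
    ContinuousAt (Δ f) x := by
  rw [InnerProductSpace.laplacian_eq_iteratedFDeriv_stdOrthonormalBasis]
  exact tendsto_finsetSum _ fun _ _ =>
    (hf.iteratedFDeriv_right (m := 0) le_rfl).continuousAt.eval_const _

lemma continuous_laplacian {f : E → ℝ} (hf : ContDiff ℝ 2 f) : Continuous (Δ f) :=
  continuous_iff_continuousAt.mpr fun _ => continuousAt_laplacian hf.contDiffAt

end Laplacian

section Green

variable {E : Type*} [NormedAddCommGroup E] [MeasurableSpace E] [BorelSpace E]
  {μ : Measure E} {f g : E → ℝ}

lemma integrable_mul_of_continuousAt_tsupport [IsFiniteMeasureOnCompacts μ]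
    (hf : ∀ x ∈ tsupport g, ContinuousAt f x) (hg : Continuous g) (hgc : HasCompactSupport g) :
    Integrable (fun x => f x * g x) μ :=
  (continuous_of_tsupport fun x hx =>
    (hf x (tsupport_mul_subset_right hx)).mul hg.continuousAt).integrable_of_hasCompactSupport
      hgc.mul_left

variable [InnerProductSpace ℝ E] [FiniteDimensional ℝ E]

lemma integrable_mul_laplacian_of_continuousAt_tsupport [IsFiniteMeasureOnCompacts μ]
    (hf : ∀ x ∈ tsupport g, ContinuousAt f x) (hg : ContDiff ℝ 2 g) (hgc : HasCompactSupport g) :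
    Integrable (fun x => f x * Δ g x) μ :=
  integrable_mul_of_continuousAt_tsupport
    (fun x hx => hf x (tsupport_laplacian_subset g hx)) (continuous_laplacian hg)
    (hgc.of_isClosed_subset (isClosed_tsupport _) (tsupport_laplacian_subset g))

lemma integrable_laplacian_mul_of_contDiffAt_tsupport [IsFiniteMeasureOnCompacts μ]
    (hf : ∀ x ∈ tsupport g, ContDiffAt ℝ 2 f x) (hg : Continuous g) (hgc : HasCompactSupport g) :
    Integrable (fun x => Δ f x * g x) μ :=
  integrable_mul_of_continuousAt_tsupport (fun x hx => continuousAt_laplacian (hf x hx)) hg hgc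

variable [μ.IsAddHaarMeasure]

lemma integral_mul_fderiv_apply_of_contDiffAt_tsupport
    (hf : ∀ x ∈ tsupport g, ContDiffAt ℝ 1 f x) (hg : ContDiff ℝ 1 g) (hgc : HasCompactSupport g)
    (v : E) : ∫ x, f x * fderiv ℝ g x v ∂μ = -∫ x, fderiv ℝ f x v * g x ∂μ := by
  refine integral_mul_fderiv_eq_neg_fderiv_mul_of_integrable ?_ ?_ ?_
    (fun x hx => (hf x hx).differentiableAt one_ne_zero)
    (fun x _ => hg.differentiable one_ne_zero x)
  · exact integrable_mul_of_continuousAt_tsupport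
      (fun x hx =>
        ((hf x hx).fderiv_right (m := 0) (by simp)).continuousAt.clm_apply continuousAt_const)
      hg.continuous hgc
  · exact integrable_mul_of_continuousAt_tsupport
      (fun x hx => (hf x (tsupport_fderiv_apply_subset ℝ v hx)).continuousAt)
      ((hg.continuous_fderiv one_ne_zero).clm_apply continuous_const) (hgc.fderiv_apply ℝ v)
  · exact integrable_mul_of_continuousAt_tsupport (fun x hx => (hf x hx).continuousAt)
      hg.continuous hgc

lemma integral_mul_iteratedFDeriv_two_of_contDiffAt_tsupport
    (hf : ∀ x ∈ tsupport g, ContDiffAt ℝ 2 f x) (hg : ContDiff ℝ 2 g) (hgc : HasCompactSupport g)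
    (v : E) :
    ∫ x, f x * iteratedFDeriv ℝ 2 g x ![v, v] ∂μ =
      ∫ x, iteratedFDeriv ℝ 2 f x ![v, v] * g x ∂μ := by
  have hg' : ContDiff ℝ 1 (fun y => fderiv ℝ g y v) :=
    (hg.fderiv_right le_rfl).clm_apply contDiff_const
  have hf' : ∀ x ∈ tsupport g, ContDiffAt ℝ 1 (fun y => fderiv ℝ f y v) x := fun x hx =>
    ((hf x hx).fderiv_right le_rfl).clm_apply contDiffAt_const
  calc ∫ x, f x * iteratedFDeriv ℝ 2 g x ![v, v] ∂μ
      = ∫ x, f x * fderiv ℝ (fun y => fderiv ℝ g y v) x v ∂μ := by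
        simp only [fderiv_fderiv_apply_self hg.contDiffAt]
    _ = -∫ x, fderiv ℝ f x v * fderiv ℝ g x v ∂μ :=
        integral_mul_fderiv_apply_of_contDiffAt_tsupport
          (fun x hx => (hf x (tsupport_fderiv_apply_subset ℝ v hx)).of_le one_le_two)
          hg' (hgc.fderiv_apply ℝ v) v
    _ = ∫ x, fderiv ℝ (fun y => fderiv ℝ f y v) x v * g x ∂μ := by
        rw [integral_mul_fderiv_apply_of_contDiffAt_tsupport hf' (hg.of_le one_le_two) hgc, neg_neg]
    _ = ∫ x, iteratedFDeriv ℝ 2 f x ![v, v] * g x ∂μ := by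
        refine integral_congr_ae (.of_forall fun x => ?_)
        by_cases hx : x ∈ tsupport g
        · simp only [fderiv_fderiv_apply_self (hf x hx)]
        · simp only [image_eq_zero_of_notMem_tsupport hx, mul_zero]

theorem integral_mul_laplacian_of_contDiffAt_tsupport
    (hf : ∀ x ∈ tsupport g, ContDiffAt ℝ 2 f x) (hg : ContDiff ℝ 2 g) (hgc : HasCompactSupport g) :
    ∫ x, f x * Δ g x ∂μ = ∫ x, Δ f x * g x ∂μ := by
  simp only [InnerProductSpace.laplacian_eq_iteratedFDeriv_stdOrthonormalBasis, Finset.mul_sum,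
    Finset.sum_mul]
  rw [integral_finsetSum, integral_finsetSum]
  · simp only [integral_mul_iteratedFDeriv_two_of_contDiffAt_tsupport hf hg hgc]
  · intro i _
    refine integrable_mul_of_continuousAt_tsupport (fun x hx => ?_) hg.continuous hgc
    exact ((hf x hx).iteratedFDeriv_right (m := 0) le_rfl).continuousAt.eval_const _
  · intro i _
    have hsupp := tsupport_iteratedFDeriv_apply_subset (f := g)
      ![stdOrthonormalBasis ℝ E i, stdOrthonormalBasis ℝ E i]
    exact integrable_mul_of_continuousAt_tsupport (fun x hx => (hf x (hsupp hx)).continuousAt)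
      ((hg.continuous_iteratedFDeriv le_rfl).eval_const _)
      (hgc.of_isClosed_subset (isClosed_tsupport _) hsupp)

end Green

section Puncture

variable {E : Type*} [NormedAddCommGroup E]

section ScaleInvariance

variable [NormedSpace ℝ E] {f g : E → ℝ} {n : ℕ}

lemma exists_norm_pow_mul_norm_iteratedFDeriv_le (hf : ContDiff ℝ n f) (hfc : HasCompactSupport f) :
    ∃ K, ∀ x, ‖x‖ ^ n * ‖iteratedFDeriv ℝ n f x‖ ≤ K := by
  have hcont : Continuous fun x => ‖x‖ ^ n * ‖iteratedFDeriv ℝ n f x‖ :=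
    (continuous_norm.pow n).mul (hf.continuous_iteratedFDeriv le_rfl).norm
  obtain ⟨K, hK⟩ := hcont.bounded_above_of_compact_support (hfc.iteratedFDeriv n).norm.mul_left
  exact ⟨K, fun x => (le_abs_self _).trans (hK x)⟩

lemma norm_pow_mul_norm_iteratedFDeriv_comp_smul (hf : ContDiff ℝ n f) (c : ℝ) (x : E) :
    ‖x‖ ^ n * ‖iteratedFDeriv ℝ n (fun y => f (c • y)) x‖ =
      ‖c • x‖ ^ n * ‖iteratedFDeriv ℝ n f (c • x)‖ := by
  rw [iteratedFDeriv_comp_const_smul c hf, norm_smul, norm_smul, norm_pow, mul_pow]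
  ring

lemma exists_norm_pow_mul_norm_iteratedFDeriv_comp_smul_mul_le
    (hf : ContDiff ℝ n f) (hfc : HasCompactSupport f)
    (hg : ContDiff ℝ n g) (hgc : HasCompactSupport g) :
    ∃ K, ∀ (c : ℝ) (x : E), ‖x‖ ^ n * ‖iteratedFDeriv ℝ n (fun y => f (c • y) * g y) x‖ ≤ K := by
  have hle {i : ℕ} (hi : i ≤ n) : (i : WithTop ℕ∞) ≤ n := by exact_mod_cast hi
  choose! A hA using fun i (hi : i ≤ n) =>
    exists_norm_pow_mul_norm_iteratedFDeriv_le (hf.of_le (hle hi)) hfc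
  choose! B hB using fun i (hi : i ≤ n) =>
    exists_norm_pow_mul_norm_iteratedFDeriv_le (hg.of_le (hle hi)) hgc
  refine ⟨∑ i ∈ Finset.range (n + 1), n.choose i * (A i * B (n - i)), fun c x => ?_⟩
  calc ‖x‖ ^ n * ‖iteratedFDeriv ℝ n (fun y => f (c • y) * g y) x‖
      ≤ ‖x‖ ^ n * ∑ i ∈ Finset.range (n + 1), n.choose i *
          ‖iteratedFDeriv ℝ i (fun y => f (c • y)) x‖ * ‖iteratedFDeriv ℝ (n - i) g x‖ := by
        gcongr
        exact norm_iteratedFDeriv_mul_le (hf.comp (contDiff_const_smul c)) hg x le_rfl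
    _ = ∑ i ∈ Finset.range (n + 1), n.choose i *
          ((‖c • x‖ ^ i * ‖iteratedFDeriv ℝ i f (c • x)‖) *
            (‖x‖ ^ (n - i) * ‖iteratedFDeriv ℝ (n - i) g x‖)) := by
        rw [Finset.mul_sum]
        refine Finset.sum_congr rfl fun i hi => ?_
        have hi' : i ≤ n := Finset.mem_range_succ_iff.mp hi
        rw [← norm_pow_mul_norm_iteratedFDeriv_comp_smul (hf.of_le (hle hi')),
          ← pow_mul_pow_sub ‖x‖ hi']
        ring
    _ ≤ ∑ i ∈ Finset.range (n + 1), n.choose i * (A i * B (n - i)) := by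
        gcongr with i hi
        all_goals have hi' : i ≤ n := Finset.mem_range_succ_iff.mp hi
        · exact le_trans (by positivity) (hA i hi' 0)
        · exact hA i hi' _
        · exact hB _ (n.sub_le i) x

end ScaleInvariance

variable [InnerProductSpace ℝ E] {φ : E → ℝ} {n : ℕ}

variable (E) in
/-- The smooth cutoff around the origin used to puncture test functions. -/
def originBump : ContDiffBump (0 : E) := ⟨1, 2, one_pos, one_lt_two⟩

/-- The test function `φ` cut off to vanish on the ball of radius `1 / c` around the origin, and
left unchanged outside the ball of radius `2 / c`. -/
def puncture (φ : E → ℝ) (c : ℝ) (x : E) : ℝ :=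
  φ x - originBump E (c • x) * φ x

lemma contDiff_puncture (hφ : ContDiff ℝ n φ) (c : ℝ) : ContDiff ℝ n (puncture φ c) :=
  hφ.sub (((originBump E).contDiff.comp (contDiff_const_smul c)).mul hφ)

lemma tsupport_puncture_subset (φ : E → ℝ) (c : ℝ) : tsupport (puncture φ c) ⊆ tsupport φ :=
  closure_mono fun x (hx : puncture φ c x ≠ 0) hφ => hx (by simp [puncture, hφ])

lemma hasCompactSupport_puncture (hφ : HasCompactSupport φ) (c : ℝ) :
    HasCompactSupport (puncture φ c) :=
  hφ.of_isClosed_subset (isClosed_tsupport _) (tsupport_puncture_subset φ c)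

lemma zero_notMem_tsupport_puncture (φ : E → ℝ) (c : ℝ) : (0 : E) ∉ tsupport (puncture φ c) := by
  rw [notMem_tsupport_iff_eventuallyEq]
  have hsmul : Tendsto (fun x : E => c • x) (𝓝 0) (𝓝 0) := by
    simpa using (continuous_const_smul c).tendsto (0 : E)
  filter_upwards [hsmul.eventually (originBump E).eventuallyEq_one] with x hx
  simp [puncture, hx]

lemma eventually_puncture_eventuallyEq (φ : E → ℝ) {x : E} (hx : x ≠ 0) :
    ∀ᶠ c in atTop, puncture φ c =ᶠ[𝓝 x] φ := by
  filter_upwards [eventually_gt_atTop (2 / ‖x‖)] with c hc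
  have hcx : 2 < ‖c • x‖ := by
    rw [div_lt_iff₀ (norm_pos_iff.mpr hx)] at hc
    rw [norm_smul]
    exact hc.trans_le (by gcongr; exact le_abs_self c)
  filter_upwards [(continuous_const_smul c).norm.continuousAt.eventually_const_lt hcx] with y hy
  have hbump : originBump E (c • y) = 0 :=
    (originBump E).zero_of_le_dist (by simpa [originBump] using hy.le)
  simp [puncture, hbump]

variable [FiniteDimensional ℝ E]

lemma exists_norm_pow_mul_norm_iteratedFDeriv_puncture_le
    (hφ : ContDiff ℝ n φ) (hφc : HasCompactSupport φ) :
    ∃ K, ∀ (c : ℝ) (x : E), ‖x‖ ^ n * ‖iteratedFDeriv ℝ n (puncture φ c) x‖ ≤ K := by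
  obtain ⟨A, hA⟩ := exists_norm_pow_mul_norm_iteratedFDeriv_le hφ hφc
  obtain ⟨B, hB⟩ := exists_norm_pow_mul_norm_iteratedFDeriv_comp_smul_mul_le
    (originBump E).contDiff (originBump E).hasCompactSupport hφ hφc
  refine ⟨A + B, fun c x => ?_⟩
  have hbump : ContDiff ℝ n fun y => originBump E (c • y) * φ y :=
    ((originBump E).contDiff.comp (contDiff_const_smul c)).mul hφ
  calc ‖x‖ ^ n * ‖iteratedFDeriv ℝ n (puncture φ c) x‖
      = ‖x‖ ^ n * ‖iteratedFDeriv ℝ n φ x -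
          iteratedFDeriv ℝ n (fun y => originBump E (c • y) * φ y) x‖ := by
        rw [← iteratedFDeriv_sub_apply hφ.contDiffAt hbump.contDiffAt]
        rfl
    _ ≤ ‖x‖ ^ n * ‖iteratedFDeriv ℝ n φ x‖ +
          ‖x‖ ^ n * ‖iteratedFDeriv ℝ n (fun y => originBump E (c • y) * φ y) x‖ := by
        rw [← mul_add]
        gcongr
        exact norm_sub_le _ _
    _ ≤ A + B := add_le_add (hA x) (hB c x)

lemma exists_norm_mul_laplacian_puncture_sub_le (U : E → ℝ) (hφ : ContDiff ℝ 2 φ)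
    (hφc : HasCompactSupport φ) :
    ∃ A B, ∀ c, ∀ x ≠ 0, ‖U x * Δ (puncture φ c) x - Δ U x * puncture φ c x‖ ≤
      (tsupport φ).indicator (fun x => ‖U x / ‖x‖ ^ 2‖ * A + ‖Δ U x‖ * B) x := by
  obtain ⟨A, hA⟩ := exists_norm_pow_mul_norm_iteratedFDeriv_puncture_le (n := 2) hφ hφc
  obtain ⟨B, hB⟩ := exists_norm_pow_mul_norm_iteratedFDeriv_puncture_le (n := 0)
    (hφ.of_le zero_le_two) hφc
  refine ⟨finrank ℝ E * A, B, fun c x hx => ?_⟩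
  by_cases hxφ : x ∈ tsupport φ
  · have hΔ : ‖x‖ ^ 2 * ‖Δ (puncture φ c) x‖ ≤ finrank ℝ E * A :=
      calc ‖x‖ ^ 2 * ‖Δ (puncture φ c) x‖
          ≤ ‖x‖ ^ 2 * (finrank ℝ E * ‖iteratedFDeriv ℝ 2 (puncture φ c) x‖) := by
            gcongr
            exact norm_laplacian_le _ x
        _ = finrank ℝ E * (‖x‖ ^ 2 * ‖iteratedFDeriv ℝ 2 (puncture φ c) x‖) := by ring
        _ ≤ finrank ℝ E * A := by gcongr; exact hA c x
    rw [indicator_of_mem hxφ]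
    calc ‖U x * Δ (puncture φ c) x - Δ U x * puncture φ c x‖
        ≤ ‖U x‖ * ‖Δ (puncture φ c) x‖ + ‖Δ U x‖ * ‖puncture φ c x‖ := by
          simpa only [norm_mul] using
            norm_sub_le (U x * Δ (puncture φ c) x) (Δ U x * puncture φ c x)
      _ = ‖U x / ‖x‖ ^ 2‖ * (‖x‖ ^ 2 * ‖Δ (puncture φ c) x‖) + ‖Δ U x‖ * ‖puncture φ c x‖ := by
          rw [norm_div, norm_pow, norm_norm]
          field_simp [norm_ne_zero_iff.mpr hx]
      _ ≤ ‖U x / ‖x‖ ^ 2‖ * (finrank ℝ E * A) + ‖Δ U x‖ * B := by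
          gcongr
          simpa using hB c x
  · have hxψ : x ∉ tsupport (puncture φ c) := fun h => hxφ (tsupport_puncture_subset φ c h)
    have hxΔ : x ∉ tsupport (Δ (puncture φ c)) := fun h => hxψ (tsupport_laplacian_subset _ h)
    simp [indicator_of_notMem hxφ, image_eq_zero_of_notMem_tsupport hxψ,
      image_eq_zero_of_notMem_tsupport hxΔ]

lemma tendsto_mul_laplacian_puncture_sub (U φ : E → ℝ) {x : E} (hx : x ≠ 0) :
    Tendsto (fun c => U x * Δ (puncture φ c) x - Δ U x * puncture φ c x) atTop
      (𝓝 (U x * Δ φ x - Δ U x * φ x)) := by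
  refine tendsto_const_nhds.congr' ?_
  filter_upwards [eventually_puncture_eventuallyEq φ hx] with c hc
  rw [hc.eq_of_nhds, (InnerProductSpace.laplacian_congr_nhds hc).eq_of_nhds]

end Puncture

section RemovableSingularity

variable {E : Type*} [NormedAddCommGroup E] [InnerProductSpace ℝ E] [FiniteDimensional ℝ E]
  [MeasurableSpace E] [BorelSpace E] {μ : Measure E} [μ.IsAddHaarMeasure] {U φ : E → ℝ}

lemma integral_mul_laplacian_puncture (hU : ∀ x ≠ 0, ContDiffAt ℝ 2 U x) (hφ : ContDiff ℝ 2 φ)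
    (hφc : HasCompactSupport φ) (c : ℝ) :
    ∫ x, (U x * Δ (puncture φ c) x - Δ U x * puncture φ c x) ∂μ = 0 := by
  have hU' : ∀ x ∈ tsupport (puncture φ c), ContDiffAt ℝ 2 U x := fun x hx =>
    hU x (ne_of_mem_of_not_mem hx (zero_notMem_tsupport_puncture φ c))
  have hψ : ContDiff ℝ 2 (puncture φ c) := contDiff_puncture hφ c
  have hψc : HasCompactSupport (puncture φ c) := hasCompactSupport_puncture hφc c
  rw [integral_sub, sub_eq_zero]
  · exact integral_mul_laplacian_of_contDiffAt_tsupport hU' hψ hψc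
  · exact integrable_mul_laplacian_of_continuousAt_tsupport
      (fun x hx => (hU' x hx).continuousAt) hψ hψc
  · exact integrable_laplacian_mul_of_contDiffAt_tsupport hU' hψ.continuous hψc

theorem integral_mul_laplacian_sub_of_locallyIntegrable_div_norm_sq [Nontrivial E]
    (hU : ∀ x ≠ 0, ContDiffAt ℝ 2 U x)
    (hUint : LocallyIntegrable (fun x => U x / ‖x‖ ^ 2) μ) (hΔU : LocallyIntegrable (Δ U) μ)
    (hφ : ContDiff ℝ 2 φ) (hφc : HasCompactSupport φ) :
    ∫ x, (U x * Δ φ x - Δ U x * φ x) ∂μ = 0 := by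
  obtain ⟨A, B, hAB⟩ := exists_norm_mul_laplacian_puncture_sub_le U hφ hφc
  have hUmeas : AEStronglyMeasurable U μ :=
    (hUint.aestronglyMeasurable.mul (by fun_prop : AEStronglyMeasurable (‖·‖ ^ 2) μ)).congr
      ((Measure.ae_ne μ 0).mono fun x hx => by simp [norm_ne_zero_iff.mpr hx])
  refine tendsto_nhds_unique
    (tendsto_integral_filter_of_dominated_convergence (l := atTop) _ (.of_forall fun c => ?_)
      (.of_forall fun c => (Measure.ae_ne μ 0).mono (hAB c)) ?_
      ((Measure.ae_ne μ 0).mono fun x => tendsto_mul_laplacian_puncture_sub U φ)) ?_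
  · exact (hUmeas.mul
      (continuous_laplacian (contDiff_puncture hφ c)).aestronglyMeasurable).sub
      (hΔU.aestronglyMeasurable.mul (contDiff_puncture hφ c).continuous.aestronglyMeasurable)
  · rw [integrable_indicator_iff (isClosed_tsupport φ).measurableSet]
    exact ((hUint.integrableOn_isCompact hφc).norm.mul_const A).add
      ((hΔU.integrableOn_isCompact hφc).norm.mul_const B)
  · simp only [integral_mul_laplacian_puncture hU hφ hφc, tendsto_const_nhds]

lemma locallyIntegrable_of_continuousAt_of_norm_le_rpow [Nontrivial E] {f : E → ℝ} {s : ℝ}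
    (hs : s < finrank ℝ E) (hf : ∀ x ≠ 0, ContinuousAt f x)
    (hbound : ∀ R, ∃ C, ∀ x ≠ 0, ‖x‖ ≤ R → ‖f x‖ ≤ C * ‖x‖ ^ (-s)) :
    LocallyIntegrable f μ := by
  have hmeas : AEStronglyMeasurable f μ := by
    rw [← restrict_compl_singleton (μ := μ) 0]
    exact ContinuousOn.aestronglyMeasurable
      (fun x hx => (hf x hx).continuousWithinAt) (measurableSet_singleton 0).compl
  refine locallyIntegrable_iff.mpr fun K hK => ?_
  obtain ⟨R, -, hR⟩ := hK.isBounded.exists_pos_norm_lt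
  obtain ⟨C, hC⟩ := hbound R
  refine (integrableOn_ball_of_norm_le_rpow (C := C) (r := R) finrank_pos hs ?_ hmeas).mono_set
    fun x hx => mem_ball_zero_iff.mpr (hR x hx)
  filter_upwards [ae_restrict_mem measurableSet_ball, ae_restrict_of_ae (Measure.ae_ne μ 0)]
    with x hx hx0
  exact hC x hx0 (mem_ball_zero_iff.mp hx).le

lemma abs_div_sq_le_of_abs_le_rpow {a C r t : ℝ} (hr : 0 < r) (h : |t| ≤ C * r ^ (-a)) :
    |t / r ^ 2| ≤ C * r ^ (-(a + 2)) := by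
  rw [abs_div, abs_of_pos (pow_pos hr 2), neg_add, ← sub_eq_add_neg, Real.rpow_sub hr,
    Real.rpow_two, mul_div_assoc']
  gcongr

theorem integral_mul_laplacian_sub_of_norm_le_rpow [Nontrivial E] {s : ℝ} (hs : s + 2 < finrank ℝ E)
    (hU : ∀ x ≠ 0, ContDiffAt ℝ 2 U x)
    (hbound : ∀ R, ∃ C, ∀ x ≠ 0, ‖x‖ ≤ R → ‖U x‖ ≤ C * ‖x‖ ^ (-s))
    (hΔbound : ∀ R, ∃ C, ∀ x ≠ 0, ‖x‖ ≤ R → ‖Δ U x‖ ≤ C * ‖x‖ ^ (-(s + 2)))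
    (hφ : ContDiff ℝ 2 φ) (hφc : HasCompactSupport φ) :
    ∫ x, (U x * Δ φ x - Δ U x * φ x) ∂μ = 0 := by
  refine integral_mul_laplacian_sub_of_locallyIntegrable_div_norm_sq hU ?_ ?_ hφ hφc
  · refine locallyIntegrable_of_continuousAt_of_norm_le_rpow hs (fun x hx =>
      (hU x hx).continuousAt.div (by fun_prop) (by simpa using hx)) fun R => ?_
    exact (hbound R).imp fun C hC x hx hxR =>
      abs_div_sq_le_of_abs_le_rpow (norm_pos_iff.mpr hx) (hC x hx hxR)
  · exact locallyIntegrable_of_continuousAt_of_norm_le_rpow hs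
      (fun x hx => continuousAt_laplacian (hU x hx)) hΔbound

end RemovableSingularity

section Radial

variable {E : Type*} [NormedAddCommGroup E] [InnerProductSpace ℝ E] {f : ℝ → ℝ} {x : E}

lemma hasFDerivAt_norm_of_ne_zero (hx : x ≠ 0) :
    HasFDerivAt (fun y : E => ‖y‖) (‖x‖⁻¹ • innerSL ℝ x) x := by
  have h := (hasStrictFDerivAt_norm_sq x).hasFDerivAt.sqrt (pow_ne_zero 2 (norm_ne_zero_iff.mpr hx))
  simp only [Real.sqrt_sq (norm_nonneg _)] at h
  convert h using 1
  rw [two_smul, ← two_smul ℝ, smul_smul]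
  congr 1
  ring

lemma hasFDerivAt_comp_norm {f' : ℝ} (hf : HasDerivAt f f' ‖x‖) (hx : x ≠ 0) :
    HasFDerivAt (fun y => f ‖y‖) ((f' / ‖x‖) • innerSL ℝ x) x := by
  rw [div_eq_mul_inv, ← smul_smul]
  exact hf.comp_hasFDerivAt x (hasFDerivAt_norm_of_ne_zero hx)

lemma contDiffAt_comp_norm (hf : ContDiffAt ℝ 2 f ‖x‖) (hx : x ≠ 0) :
    ContDiffAt ℝ 2 (fun y => f ‖y‖) x :=
  hf.comp x (contDiffAt_norm ℝ hx)

lemma iteratedFDeriv_two_comp_norm_apply_self (hf : ContDiffAt ℝ 2 f ‖x‖) (hx : x ≠ 0) (v : E) :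
    iteratedFDeriv ℝ 2 (fun y => f ‖y‖) x ![v, v] =
      (deriv (deriv f) ‖x‖ / ‖x‖ ^ 2 - deriv f ‖x‖ / ‖x‖ ^ 3) * ⟪x, v⟫ ^ 2 +
        deriv f ‖x‖ / ‖x‖ * ‖v‖ ^ 2 := by
  have hx' : ‖x‖ ≠ 0 := norm_ne_zero_iff.mpr hx
  have hf' : HasDerivAt (deriv f) (deriv (deriv f) ‖x‖) ‖x‖ :=
    ((hf.derivWithin le_rfl).differentiableAt one_ne_zero).hasDerivAt
  have hgrad : (fun y => fderiv ℝ (fun z : E => f ‖z‖) y v) =ᶠ[𝓝 x]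
      fun y => deriv f ‖y‖ / ‖y‖ * ⟪y, v⟫ := by
    have hdiff : ∀ᶠ y in 𝓝 x, ContDiffAt ℝ 2 f ‖y‖ :=
      continuous_norm.continuousAt.eventually (hf.eventually (by simp))
    filter_upwards [hdiff, isOpen_ne.mem_nhds hx] with y hy hy0
    have hd := (hy.differentiableAt two_ne_zero).hasDerivAt
    simp [(hasFDerivAt_comp_norm hd hy0).fderiv]
  have hinner : HasFDerivAt (fun y : E => ⟪y, v⟫) (innerSL ℝ v) x := by
    simp_rw [real_inner_comm v]
    exact (innerSL ℝ v).hasFDerivAt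
  have hquot := hasFDerivAt_comp_norm (hf'.fun_div (hasDerivAt_id' ‖x‖) hx') hx
  rw [← fderiv_fderiv_apply_self (contDiffAt_comp_norm hf hx), hgrad.fderiv_eq,
    (hquot.fun_mul hinner).fderiv]
  simp only [mul_one, add_apply, smul_apply, coe_innerSL_apply, inner_self_eq_norm_sq_to_K,
    Real.ringHom_apply, smul_eq_mul]
  field_simp
  ring

lemma laplacian_comp_norm [FiniteDimensional ℝ E] (hf : ContDiffAt ℝ 2 f ‖x‖) (hx : x ≠ 0) :
    Δ (fun y : E => f ‖y‖) x =
      deriv (deriv f) ‖x‖ + (finrank ℝ E - 1) / ‖x‖ * deriv f ‖x‖ := by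
  have hx' : ‖x‖ ≠ 0 := norm_ne_zero_iff.mpr hx
  simp only [InnerProductSpace.laplacian_eq_iteratedFDeriv_stdOrthonormalBasis,
    iteratedFDeriv_two_comp_norm_apply_self hf hx, Finset.sum_add_distrib, ← Finset.mul_sum,
    OrthonormalBasis.sum_sq_inner_left, OrthonormalBasis.norm_eq_one,
    one_pow, Finset.sum_const, Finset.card_univ, Fintype.card_fin, nsmul_eq_mul, mul_one]
  field_simp
  ring

lemma laplacian_comp_norm_of_radial_ode [FiniteDimensional ℝ E] {α : ℝ} {u : ℝ → ℝ}
    (hu : ContDiffOn ℝ 2 u (Ioi 0))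
    (hode : ∀ r > 0, deriv (deriv u) r + (finrank ℝ E - 1) / r * deriv u r + |u r| ^ α * u r = 0)
    {x : E} (hx : x ≠ 0) : Δ (fun y : E => u ‖y‖) x = -(|u ‖x‖| ^ α * u ‖x‖) := by
  have hr : 0 < ‖x‖ := norm_pos_iff.mpr hx
  rw [laplacian_comp_norm (hu.contDiffAt (Ioi_mem_nhds hr)) hx]
  linear_combination hode ‖x‖ hr

lemma norm_laplacian_comp_norm_of_radial_ode [FiniteDimensional ℝ E] {α : ℝ} {u : ℝ → ℝ}
    (hα : α + 1 ≠ 0) (hu : ContDiffOn ℝ 2 u (Ioi 0))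
    (hode : ∀ r > 0, deriv (deriv u) r + (finrank ℝ E - 1) / r * deriv u r + |u r| ^ α * u r = 0)
    {x : E} (hx : x ≠ 0) : ‖Δ (fun y : E => u ‖y‖) x‖ = |u ‖x‖| ^ (α + 1) := by
  rw [laplacian_comp_norm_of_radial_ode hu hode hx, norm_neg, norm_mul,
    Real.norm_of_nonneg (by positivity), Real.norm_eq_abs, Real.rpow_add_one' (abs_nonneg _) hα]

end Radial

section EmdenFowler

/-- The energy of a solution `v` of the autonomous equation obtained from the radial equation by the
Emden–Fowler substitution `v = r ^ (2 / α) * u`. With respect to `log r`, the derivative of `v` is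
`w = r * v'`, and `w` satisfies `r * w' = c * w + b * v - |v| ^ α * v`. -/
def emdenFowlerEnergy (α b v w : ℝ) : ℝ :=
  w ^ 2 / 2 - b * v ^ 2 / 2 + |v| ^ (α + 2) / (α + 2)

lemma monotoneOn_emdenFowlerEnergy {α b c : ℝ} (hα : 0 < α) (hc : 0 ≤ c) {v w : ℝ → ℝ}
    (hv : ∀ r > 0, HasDerivAt v (w r / r) r)
    (hw : ∀ r > 0, HasDerivAt w ((c * w r + b * v r - |v r| ^ α * v r) / r) r) :
    MonotoneOn (fun r => emdenFowlerEnergy α b (v r) (w r)) (Ioi 0) := by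
  have hderiv : ∀ r > 0, HasDerivAt (fun r => emdenFowlerEnergy α b (v r) (w r))
      (c * w r ^ 2 / r) r := fun r hr => by
    have hpow := (hasDerivAt_abs_rpow (v r) (by linarith : 1 < α + 2)).comp r (hv r hr)
    refine (((((hw r hr).fun_pow 2).div_const 2).sub
      ((((hv r hr).fun_pow 2).const_mul b).div_const 2)).add
        (hpow.div_const (α + 2))).congr_deriv ?_
    rw [add_sub_cancel_right]
    have : α + 2 ≠ 0 := by positivity
    field_simp
    ring
  refine monotoneOn_of_deriv_nonneg (convex_Ioi 0)
    (fun r hr => (hderiv r hr).continuousAt.continuousWithinAt) ?_ ?_ <;>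
    rw [interior_Ioi]
  · exact fun r hr => (hderiv r hr).differentiableAt.differentiableWithinAt
  · intro r (hr : 0 < r)
    rw [(hderiv r hr).deriv]
    positivity

lemma exists_forall_abs_le_of_emdenFowlerEnergy_le {α : ℝ} (hα : 0 < α) (b K : ℝ) :
    ∃ C, ∀ v w, emdenFowlerEnergy α b v w ≤ K → |v| ≤ C := by
  set D := (α + 2) * (|K| + |b|)
  refine ⟨max 1 (D ^ α⁻¹), fun v w h => ?_⟩
  by_contra! hv
  obtain ⟨hv1, hvD⟩ := max_lt_iff.mp hv
  have hv0 : 0 < |v| := one_pos.trans hv1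
  have hpow : D < |v| ^ α := by
    rwa [← Real.rpow_inv_lt_iff_of_pos (by positivity) hv0.le hα]
  have hle : |v| ^ α * v ^ 2 / (α + 2) ≤ (|K| + |b|) * v ^ 2 :=
    calc |v| ^ α * v ^ 2 / (α + 2) = |v| ^ (α + 2) / (α + 2) := by
          rw [Real.rpow_add hv0, Real.rpow_two, sq_abs]
      _ ≤ K + b * v ^ 2 / 2 := by
          rw [emdenFowlerEnergy] at h
          linarith [sq_nonneg w]
      _ ≤ |K| * v ^ 2 + |b| * v ^ 2 := by
          have hv2 : 1 ≤ v ^ 2 := (one_le_sq_iff_one_le_abs v).mpr hv1.le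
          have hK : K ≤ |K| * v ^ 2 :=
            (le_abs_self K).trans (le_mul_of_one_le_right (abs_nonneg K) hv2)
          have hb : b * v ^ 2 ≤ |b| * v ^ 2 := by gcongr; exact le_abs_self b
          have hb0 : 0 ≤ |b| * v ^ 2 := by positivity
          linarith
      _ = (|K| + |b|) * v ^ 2 := by ring
  rw [div_le_iff₀ (by positivity)] at hle
  have hv2 : 0 < v ^ 2 := by rw [← sq_abs]; positivity
  refine hpow.not_ge (le_of_mul_le_mul_right (hle.trans_eq ?_) hv2)
  ring

lemma hasDerivAt_rpow_mul {u : ℝ → ℝ} {u' r : ℝ} (hu : HasDerivAt u u' r) (a : ℝ) (hr : 0 < r) :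
    HasDerivAt (fun r => r ^ a * u r) (r ^ a * (a * u r + r * u') / r) r := by
  refine ((Real.hasDerivAt_rpow_const (.inl hr.ne')).fun_mul hu).congr_deriv ?_
  rw [Real.rpow_sub_one hr.ne']
  field_simp

lemma hasDerivAt_rpow_mul_add_of_radial_ode {α d r u'' : ℝ} {u u' : ℝ → ℝ} (hα : α ≠ 0)
    (hr : 0 < r) (hu : HasDerivAt u (u' r) r) (hu' : HasDerivAt u' u'' r)
    (hode : u'' + (d - 1) / r * u' r + |u r| ^ α * u r = 0) :
    let a := 2 / α
    HasDerivAt (fun r => r ^ a * (a * u r + r * u' r))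
      (((2 * a - (d - 2)) * (r ^ a * (a * u r + r * u' r)) + a * (d - 2 - a) * (r ^ a * u r) -
        |r ^ a * u r| ^ α * (r ^ a * u r)) / r) r := by
  intro a
  refine (hasDerivAt_rpow_mul ((hu.const_mul a).fun_add ((hasDerivAt_id' r).fun_mul hu')) a
    hr).congr_deriv ?_
  have hpow : |r ^ a * u r| ^ α = r ^ 2 * |u r| ^ α := by
    rw [abs_mul, Real.mul_rpow (abs_nonneg _) (abs_nonneg _), abs_of_pos (by positivity),
      ← Real.rpow_mul hr.le, div_mul_cancel₀ 2 hα, Real.rpow_two]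
  have hu'' : r ^ 2 * u'' = -((d - 1) * (r * u' r)) - r ^ 2 * |u r| ^ α * u r := by
    field_simp at hode
    linear_combination r * hode
  rw [hpow]
  congr 1
  linear_combination r ^ a * hu''

theorem exists_forall_abs_le_rpow_of_radial_ode {α d : ℝ} (hα : 0 < α) (hd : α * (d - 2) ≤ 4)
    {u : ℝ → ℝ} (hu : ContDiffOn ℝ 2 u (Ioi 0))
    (hode : ∀ r > 0, deriv (deriv u) r + (d - 1) / r * deriv u r + |u r| ^ α * u r = 0) (R : ℝ) :
    ∃ C, ∀ r ∈ Ioc 0 R, |u r| ≤ C * r ^ (-(2 / α)) := by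
  set a := 2 / α
  have hu2 : ∀ r > 0, ContDiffAt ℝ 2 u r := fun r hr => hu.contDiffAt (Ioi_mem_nhds hr)
  have hu' : ∀ r > 0, HasDerivAt u (deriv u r) r := fun r hr =>
    ((hu2 r hr).differentiableAt two_ne_zero).hasDerivAt
  have hu'' : ∀ r > 0, HasDerivAt (deriv u) (deriv (deriv u) r) r := fun r hr =>
    (((hu2 r hr).derivWithin le_rfl).differentiableAt one_ne_zero).hasDerivAt
  have hc : 0 ≤ 2 * a - (d - 2) := by
    have : d - 2 ≤ 4 / α := (le_div_iff₀' hα).mpr hd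
    linarith [show 2 * a = 4 / α by ring]
  have hmono := monotoneOn_emdenFowlerEnergy hα hc
    (fun r hr => hasDerivAt_rpow_mul (hu' r hr) a hr)
    (fun r hr => hasDerivAt_rpow_mul_add_of_radial_ode hα.ne' hr (hu' r hr) (hu'' r hr) (hode r hr))
  obtain ⟨C, hC⟩ := exists_forall_abs_le_of_emdenFowlerEnergy_le hα (a * (d - 2 - a))
    (emdenFowlerEnergy α (a * (d - 2 - a)) (R ^ a * u R) (R ^ a * (a * u R + R * deriv u R)))
  refine ⟨C, fun r ⟨hr, hrR⟩ => ?_⟩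
  have hv : |r ^ a * u r| ≤ C := hC _ _ (hmono hr (hr.trans_le hrR) hrR)
  rw [abs_mul, abs_of_pos (by positivity)] at hv
  rwa [Real.rpow_neg hr.le, ← div_eq_mul_inv, le_div_iff₀' (by positivity)]

lemma abs_rpow_add_one_le_of_abs_le_rpow {α C r t : ℝ} (hα : 0 < α) (hr : 0 < r)
    (h : |t| ≤ C * r ^ (-(2 / α))) : |t| ^ (α + 1) ≤ C ^ (α + 1) * r ^ (-(2 / α + 2)) := by
  have hC : 0 ≤ C := nonneg_of_mul_nonneg_left ((abs_nonneg t).trans h) (by positivity)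
  calc |t| ^ (α + 1) ≤ (C * r ^ (-(2 / α))) ^ (α + 1) := by gcongr
    _ = C ^ (α + 1) * r ^ (-(2 / α + 2)) := by
        rw [Real.mul_rpow hC (by positivity), ← Real.rpow_mul hr.le]
        congr 2
        field_simp
        ring

end EmdenFowler

section RadialSolution

variable {E : Type*} [NormedAddCommGroup E] [InnerProductSpace ℝ E] [FiniteDimensional ℝ E]
  [MeasurableSpace E] [BorelSpace E] {μ : Measure E} [μ.IsAddHaarMeasure]
  {α : ℝ} {u : ℝ → ℝ}

theorem stmt_15_general (hα : 0 < α) (hsub : 2 < α * (finrank ℝ E - 2))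
    (hcrit : α * (finrank ℝ E - 2) ≤ 4) (hu : ContDiffOn ℝ 2 u (Ioi 0))
    (hode : ∀ r > 0,
      deriv (deriv u) r + (finrank ℝ E - 1) / r * deriv u r + |u r| ^ α * u r = 0) :
    LocallyIntegrable (fun x : E => |u ‖x‖| ^ (α + 1)) μ ∧
      ∀ φ : E → ℝ, ContDiff ℝ 2 φ → HasCompactSupport φ →
        ∫ x, (u ‖x‖ * Δ φ x + |u ‖x‖| ^ α * u ‖x‖ * φ x) ∂μ = 0 := by
  have hs : 2 / α + 2 < finrank ℝ E := by
    rw [← lt_sub_iff_add_lt, div_lt_iff₀' hα]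
    exact hsub
  have : Nontrivial E := by
    have : 0 < (finrank ℝ E : ℝ) := lt_trans (by positivity) hs
    exact nontrivial_of_finrank_pos (R := ℝ) (by exact_mod_cast this)
  have hbound (R : ℝ) : ∃ C, ∀ x : E, x ≠ 0 → ‖x‖ ≤ R → |u ‖x‖| ≤ C * ‖x‖ ^ (-(2 / α)) :=
    (exists_forall_abs_le_rpow_of_radial_ode hα hcrit hu hode R).imp fun C hC x hx hxR =>
      hC ‖x‖ ⟨norm_pos_iff.mpr hx, hxR⟩
  have hpow (R : ℝ) : ∃ C, ∀ x : E, x ≠ 0 → ‖x‖ ≤ R →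
      |u ‖x‖| ^ (α + 1) ≤ C * ‖x‖ ^ (-(2 / α + 2)) :=
    let ⟨C, hC⟩ := hbound R
    ⟨C ^ (α + 1), fun x hx hxR =>
      abs_rpow_add_one_le_of_abs_le_rpow hα (norm_pos_iff.mpr hx) (hC x hx hxR)⟩
  have hU : ∀ x ≠ 0, ContDiffAt ℝ 2 (fun y : E => u ‖y‖) x := fun x hx =>
    contDiffAt_comp_norm (hu.contDiffAt (Ioi_mem_nhds (norm_pos_iff.mpr hx))) hx
  have hΔ : ∀ x ≠ 0, Δ (fun y : E => u ‖y‖) x = -(|u ‖x‖| ^ α * u ‖x‖) := fun x hx =>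
    laplacian_comp_norm_of_radial_ode hu hode hx
  constructor
  · refine locallyIntegrable_of_continuousAt_of_norm_le_rpow hs (fun x hx =>
      (hU x hx).continuousAt.abs.rpow_const (.inr (by positivity))) fun R => ?_
    simpa only [Real.norm_of_nonneg (Real.rpow_nonneg (abs_nonneg _) _)] using hpow R
  · intro φ hφ hφc
    have hΔbound (R : ℝ) : ∃ C, ∀ x ≠ 0, ‖x‖ ≤ R →
        ‖Δ (fun y : E => u ‖y‖) x‖ ≤ C * ‖x‖ ^ (-(2 / α + 2)) :=
      (hpow R).imp fun C hC x hx hxR =>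
        (norm_laplacian_comp_norm_of_radial_ode (by positivity) hu hode hx).trans_le
          (hC x hx hxR)
    rw [← integral_mul_laplacian_sub_of_norm_le_rpow (μ := μ) hs hU hbound hΔbound hφ hφc]
    refine integral_congr_ae ((Measure.ae_ne μ 0).mono fun x hx => ?_)
    simp only [hΔ x hx]
    ring

end RadialSolution

lemma lapl_eq_laplacian {N : ℕ} (f : Euc N → ℝ) : lapl f = Δ f := by
  ext x
  simp [lapl, iteratedFDeriv_two_apply,
    InnerProductSpace.laplacian_eq_iteratedFDeriv_orthonormalBasis f
      (EuclideanSpace.basisFun (Fin N) ℝ)]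

theorem stmt_15 (N : ℕ) (hN : 3 ≤ N) (α : ℝ)
    (hα1 : 2 / ((N : ℝ) - 2) < α) (hα2 : α < 4 / ((N : ℝ) - 2))
    (u : ℝ → ℝ) (huC2 : ContDiffOn ℝ 2 u (Set.Ioi 0))
    (hune : ∃ r : ℝ, 0 < r ∧ u r ≠ 0)
    (huode : ∀ r : ℝ, 0 < r →
      deriv (deriv u) r + (((N : ℝ) - 1) / r) * deriv u r + |u r| ^ α * u r = 0) :
    -- U ∈ L^{α+1}_loc(ℝ^N), where U(x) = u(|x|)
    (∀ R : ℝ, 0 < R →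
      IntegrableOn (fun x : Euc N => |u ‖x‖| ^ (α + 1)) (Metric.ball 0 R)) ∧
    -- U is a distributional solution of −ΔU = |U|^α U on ℝ^N
    (∀ φ : Euc N → ℝ, ContDiff ℝ (⊤ : ℕ∞) φ → HasCompactSupport φ →
      ∫ x : Euc N, (u ‖x‖ * lapl φ x + |u ‖x‖| ^ α * u ‖x‖ * φ x) = 0) := by
  have hN2 : (0 : ℝ) < N - 2 := by
    have : (3 : ℝ) ≤ N := by exact_mod_cast hN
    linarith
  have hdim : (finrank ℝ (Euc N) : ℝ) = N := by simp
  obtain ⟨hint, hweak⟩ := stmt_15_general (μ := (volume : Measure (Euc N)))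
    ((by positivity : 0 < 2 / ((N : ℝ) - 2)).trans hα1)
    (by rw [hdim]; exact (div_lt_iff₀ hN2).mp hα1)
    (by rw [hdim]; exact ((lt_div_iff₀ hN2).mp hα2).le) huC2 (by simpa only [hdim] using huode)
  refine ⟨fun R _ => ?_, fun φ hφ hφc => ?_⟩
  · exact (hint.integrableOn_isCompact (isCompact_closedBall 0 R)).mono_set
      Metric.ball_subset_closedBall
  · rw [lapl_eq_laplacian]
    exact hweak φ (contDiff_infty.mp hφ 2) hφc

end
end

section
/- For every r₀ > 0 and every a with 0 < a < ((α+2)/2)^{1/α}, let b > 2a/α be the real number determined by (1/2)(b − 2a/α)² = a² (((N−2)α−2)/(α²(α+2))) (α+2 − 2a^α), and let u be the (maximal) solution of u'' + ((N−1)/r)u' + |u|^α u = 0 with u(r₀) = a β^{1/α} r₀^{−2/α} and u'(r₀) = −b β^{1/α} r₀^{−2/α−1}; then u extends to a C² solution on all of (0,∞) which is sign-changing and singular at 0: u takes both strictly positive and strictly negative values, there exists ε ∈ {+1,−1} with r^{2/α}u(r) → εβ^{1/α} as r→0, |u(r)| ≤ C r^{−(N−2−2/α)} for r > 1 for some constant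 C, and for every R > 0 there exists r > R with u(r) = 0. Moreover distinct pairs (r₀, a) yield distinct solutions u, so this is a genuine two-parameter family of sign-changing singular radial stationary solutions of the nonlinear heat equation. -/
open Filter

/-!
Write `u r = β^(1/α) r^(-2/α) w(log r)`. The radial equation becomes the autonomous Newton equation
`w'' = δ w' - V'(w)` with the double-well potential `V x = β (|x|^(α+2)/(α+2) - x²/2)` and the
anti-damping `δ = 4/α - (N - 2) > 0`, so the energy `E = w'²/2 + V(w)` satisfies `E' = δ w'²`. The
relation between `a` and `b` says exactly that `E = 0` at `t = log r₀`.

Backwards in time `E` is negative, hence `w` stays in the well around `1`, and being damped there it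
converges to the equilibrium `1`. Forwards in time `E` is positive, which excludes convergence to
an equilibrium, and `w` keeps crossing `0`. Since `E' ≤ 2δ (E + K)` for a suitable constant `K`, the
growth of `w` is at most `exp(δt)`, which is the decay of `u`. Finally `E` is strictly increasing,
so it vanishes at one time only: `u` determines `r₀`, and with it `a`.
-/

section GlobalExistence

open Set Metric
open scoped Manifold

theorem forall_lt_of_continuation {f : ℝ → ℝ} {R T : ℝ} (hf : Continuous f) (hf₀ : f 0 < R)
    (h : ∀ S ∈ Icc 0 T, (∀ t ∈ Icc (-S) S, f t ≤ R) → ∀ t ∈ Icc (-S) S, f t < R) :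
    ∀ t ∈ Icc (-T) T, f t < R := by
  by_contra! hexit
  -- `t₁` is a point closest to `0` at which `f < R` fails.
  obtain ⟨t₁, ⟨ht₁T, ht₁R : R ≤ f t₁⟩, hmin⟩ :=
    (isCompact_Icc.inter_right (isClosed_le continuous_const hf)).exists_isMinOn hexit
      continuous_abs.continuousOn
  have hinside : ∀ t ∈ Ioo (-|t₁|) |t₁|, f t ≤ R := by
    intro t ht
    by_contra! hRt
    have ht' : |t| < |t₁| := abs_lt.2 ht
    exact ht'.not_ge (hmin ⟨abs_le.1 (ht'.le.trans (abs_le.2 ht₁T)), hRt.le⟩)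
  have ht₁ : -|t₁| ≠ |t₁| := by
    intro heq
    have : t₁ = 0 := abs_eq_zero.1 (by linarith)
    exact (this ▸ ht₁R).not_gt hf₀
  have hclosed : ∀ t ∈ Icc (-|t₁|) |t₁|, f t ≤ R := by
    rw [← closure_Ioo ht₁]
    exact closure_minimal hinside (isClosed_le hf continuous_const)
  exact (h |t₁| ⟨abs_nonneg _, abs_le.2 ht₁T⟩ hclosed t₁ (abs_le.1 le_rfl)).not_ge ht₁R

variable {E : Type*} [NormedAddCommGroup E] [NormedSpace ℝ E] {F : E → E} {x₀ : E}

theorem isMIntegralCurveOn_iff_isIntegralCurveOn {γ : ℝ → E} {s : Set ℝ} :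
    IsMIntegralCurveOn (I := 𝓘(ℝ, E)) γ F s ↔ IsIntegralCurveOn γ (fun _ ↦ F) s :=
  forall₂_congr fun _ _ ↦
    hasMFDerivWithinAt_iff_hasFDerivWithinAt

theorem exists_isIntegralCurve_of_forall_Ioo [CompleteSpace E] (hF : ContDiff ℝ 1 F)
    (h : ∀ T : ℝ, ∃ γ : ℝ → E, γ 0 = x₀ ∧ IsIntegralCurveOn γ (fun _ ↦ F) (Ioo (-T) T)) :
    ∃ γ : ℝ → E, γ 0 = x₀ ∧ IsIntegralCurve γ fun _ ↦ F := by
  obtain ⟨γ, hγ₀, hγ⟩ := (exists_isMIntegralCurve_iff_exists_isMIntegralCurveOn_Ioo (I := 𝓘(ℝ, E))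
    (contMDiff_vectorSpace_iff_contDiff.2 hF) x₀).2 fun T ↦ by
      simpa only [isMIntegralCurveOn_iff_isIntegralCurveOn] using h T
  exact ⟨γ, hγ₀, isIntegralCurveOn_univ.1 <|
    isMIntegralCurveOn_iff_isIntegralCurveOn.1 (hγ.isMIntegralCurveOn univ)⟩

theorem exists_isIntegralCurve_of_hasCompactSupport [CompleteSpace E]
    (hF : ContDiff ℝ 1 F) (hsupp : HasCompactSupport F) (x₀ : E) :
    ∃ γ : ℝ → E, γ 0 = x₀ ∧ IsIntegralCurve γ fun _ ↦ F := by
  obtain ⟨K, hK⟩ := hF.lipschitzWith_of_hasCompactSupport hsupp one_ne_zero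
  obtain ⟨L, hL⟩ := hsupp.exists_bound_of_continuous hF.continuous
  refine exists_isIntegralCurve_of_forall_Ioo hF fun T ↦ ?_
  let t₀ : Icc (-|T|) |T| := ⟨0, by simp⟩
  have hPL : IsPicardLindelof (fun _ ↦ F) t₀ x₀ (L.toNNReal * |T|.toNNReal) 0 L.toNNReal K := by
    refine .of_time_independent (fun x _ ↦ (hL x).trans L.le_coe_toNNReal) hK.lipschitzOnWith ?_
    simp [t₀]
  obtain ⟨γ, hγ₀, hγ⟩ := hPL.exists_eq_forall_mem_Icc_hasDerivWithinAt₀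
  exact ⟨γ, hγ₀, IsIntegralCurveOn.mono hγ <|
    Ioo_subset_Icc_self.trans (Icc_subset_Icc (neg_le_neg (le_abs_self T)) (le_abs_self T))⟩

theorem exists_isIntegralCurve_of_apriori_bound [FiniteDimensional ℝ E] (hF : ContDiff ℝ 1 F)
    (hbound : ∀ T : ℝ, ∃ R : ℝ, ∀ S ∈ Icc 0 T, ∀ γ : ℝ → E, γ 0 = x₀ →
      IsIntegralCurveOn γ (fun _ ↦ F) (Icc (-S) S) → ∀ t ∈ Icc (-S) S, ‖γ t‖ < R) :
    ∃ γ : ℝ → E, γ 0 = x₀ ∧ IsIntegralCurve γ fun _ ↦ F := by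
  have : CompleteSpace E := FiniteDimensional.complete ℝ E
  refine exists_isIntegralCurve_of_forall_Ioo hF fun T ↦ ?_
  obtain ⟨R, hR⟩ := hbound |T|
  have hR₀ : ‖x₀‖ < R := by
    simpa using hR 0 ⟨le_rfl, abs_nonneg T⟩ (fun _ ↦ x₀) rfl
      (fun t _ ↦ HasFDerivWithinAt.of_subsingleton (by simp)) 0 (by simp)
  let χ : ContDiffBump (0 : E) := ⟨R, R + 1, (norm_nonneg _).trans_lt hR₀, lt_add_one R⟩
  have hχF : ∀ x, ‖x‖ ≤ R → χ x • F x = F x := fun x hx ↦ by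
    rw [χ.one_of_mem_closedBall (mem_closedBall_zero_iff.2 hx), one_smul]
  obtain ⟨γ, hγ₀, hγ⟩ := exists_isIntegralCurve_of_hasCompactSupport (F := fun x ↦ χ x • F x)
    (χ.contDiff.smul hF) χ.hasCompactSupport.smul_right x₀
  have hγF : ∀ S : Set ℝ, (∀ t ∈ S, ‖γ t‖ ≤ R) → IsIntegralCurveOn γ (fun _ ↦ F) S :=
    fun S hS t ht ↦ by simpa only [hχF _ (hS t ht)] using (hγ t).hasDerivWithinAt
  have hcont : Continuous γ := continuous_iff_continuousAt.2 fun t ↦ (hγ t).continuousAt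
  have hlt := forall_lt_of_continuation hcont.norm (hγ₀ ▸ hR₀)
    fun S hS hle ↦ hR S hS γ hγ₀ (hγF _ hle)
  refine ⟨γ, hγ₀, hγF _ fun t ht ↦ (hlt t (abs_le.1 ?_)).le⟩
  exact (abs_lt.2 ht).le.trans (le_abs_self T)

end GlobalExistence

section Calculus

open Set Topology

theorem le_mul_exp_of_abs_deriv_le {Q Q' : ℝ → ℝ} {s : Set ℝ} {c t₀ t : ℝ} (hs : Convex ℝ s)
    (hQ : ∀ t ∈ s, HasDerivWithinAt Q (Q' t) s t) (hbound : ∀ t ∈ s, |Q' t| ≤ c * Q t)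
    (ht₀ : t₀ ∈ s) (ht : t ∈ s) :
    Q t ≤ Q t₀ * Real.exp (c * |t - t₀|) := by
  have hweighted : ∀ k : ℝ, ∀ t ∈ s, HasDerivWithinAt (fun t ↦ Q t * Real.exp (k * t))
      ((Q' t + k * Q t) * Real.exp (k * t)) s t := fun k t ht ↦ by
    have hexp : HasDerivAt (fun t ↦ Real.exp (k * t)) (Real.exp (k * t) * (k * 1)) t :=
      ((hasDerivAt_id t).const_mul k).exp
    exact ((hQ t ht).mul hexp.hasDerivWithinAt).congr_deriv (by ring)
  have hexp_sub : ∀ k : ℝ, Q t * Real.exp (k * t) ≤ Q t₀ * Real.exp (k * t₀) →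
      Q t ≤ Q t₀ * Real.exp (k * (t₀ - t)) := fun k h ↦ by
    rwa [mul_sub, Real.exp_sub, ← mul_div_assoc, le_div_iff₀ (Real.exp_pos _)]
  rcases le_total t₀ t with hle | hle
  · have hanti : AntitoneOn (fun t ↦ Q t * Real.exp (-c * t)) s :=
      antitoneOn_of_hasDerivWithinAt_nonpos hs
        (fun t ht ↦ (hweighted (-c) t ht).continuousWithinAt)
        (fun t ht ↦ (hweighted (-c) t (interior_subset ht)).mono interior_subset)
        fun t ht ↦ mul_nonpos_of_nonpos_of_nonneg
          (by linarith [(abs_le.1 (hbound t (interior_subset ht))).2]) (Real.exp_pos _).le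
    convert hexp_sub (-c) (hanti ht₀ ht hle) using 3
    rw [abs_of_nonneg (sub_nonneg.2 hle)]; ring
  · have hmono : MonotoneOn (fun t ↦ Q t * Real.exp (c * t)) s :=
      monotoneOn_of_hasDerivWithinAt_nonneg hs
        (fun t ht ↦ (hweighted c t ht).continuousWithinAt)
        (fun t ht ↦ (hweighted c t (interior_subset ht)).mono interior_subset)
        fun t ht ↦ mul_nonneg
          (by linarith [(abs_le.1 (hbound t (interior_subset ht))).1]) (Real.exp_pos _).le
    convert hexp_sub c (hmono ht ht₀ hle) using 3
    rw [abs_of_nonpos (sub_nonpos.2 hle)]; ring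

theorem lt_of_monotone_of_hasDerivAt_ne_zero {f : ℝ → ℝ} {f' a b x : ℝ} (hf : Monotone f)
    (hab : a < b) (hx : x ∈ Icc a b) (hderiv : HasDerivAt f f' x) (hf' : f' ≠ 0) : f a < f b := by
  refine (hf hab.le).lt_of_ne fun heq ↦ hf' ?_
  have hconst : ∀ t ∈ Icc a b, f t = f a :=
    fun t ht ↦ le_antisymm ((hf ht.2).trans heq.ge) (hf ht.1)
  exact (uniqueDiffOn_Icc hab x hx).eq_deriv _ hderiv.hasDerivWithinAt
    ((hasDerivWithinAt_const x _ (f a)).congr hconst (hconst x hx))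

theorem tendsto_zero_of_tendsto_sq {X : Type*} {l : Filter X} {f : X → ℝ}
    (hf : Tendsto (fun x ↦ f x ^ 2) l (𝓝 0)) : Tendsto f l (𝓝 0) := by
  refine (tendsto_zero_iff_abs_tendsto_zero f).2 ?_
  simpa [Function.comp_def, Real.sqrt_sq_eq_abs] using hf.sqrt

theorem tendsto_atTop_or_exists_tendsto_of_monotoneOn_Ici {f : ℝ → ℝ} {T : ℝ}
    (hf : MonotoneOn f (Ici T)) : Tendsto f atTop atTop ∨ ∃ L, Tendsto f atTop (𝓝 L) := by
  have hmono : Monotone fun t ↦ f (max T t) := fun s t hst ↦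
    hf (le_max_left T s) (le_max_left T t) (max_le_max_left T hst)
  have heq : (fun t ↦ f (max T t)) =ᶠ[atTop] f :=
    (eventually_ge_atTop T).mono fun t ht ↦ by simp only [max_eq_right ht]
  exact (tendsto_atTop_of_monotone hmono).imp (fun h ↦ h.congr' heq)
    fun ⟨L, hL⟩ ↦ ⟨L, hL.congr' heq⟩

theorem exists_tendsto_of_antitoneOn_Ici {f : ℝ → ℝ} {m T : ℝ} (hf : AntitoneOn f (Ici T))
    (hm : ∀ t ∈ Ici T, m ≤ f t) : ∃ L, Tendsto f atTop (𝓝 L) := by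
  rcases tendsto_atTop_or_exists_tendsto_of_monotoneOn_Ici hf.neg with htop | ⟨L, hL⟩
  · obtain ⟨t, hft, ht⟩ :=
      ((htop.eventually_gt_atTop (-m)).and (eventually_ge_atTop T)).exists
    exact absurd (hm t ht) (by simpa using hft)
  · exact ⟨-L, by simpa using hL.neg⟩

theorem tendsto_atBot_of_hasDerivAt_le {f f' : ℝ → ℝ} {c T : ℝ} (hc : c < 0)
    (hf : ∀ t ≥ T, HasDerivAt f (f' t) t) (hf' : ∀ t ≥ T, f' t ≤ c) : Tendsto f atTop atBot := by
  have hanti : AntitoneOn (fun t ↦ f t - c * t) (Ici T) := by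
    have hderiv : ∀ t ≥ T, HasDerivAt (fun t ↦ f t - c * t) (f' t - c * 1) t :=
      fun t ht ↦ (hf t ht).sub ((hasDerivAt_id t).const_mul c)
    refine antitoneOn_of_hasDerivWithinAt_nonpos (f' := fun t ↦ f' t - c * 1) (convex_Ici T)
      (fun t ht ↦ (hderiv t ht).continuousAt.continuousWithinAt)
      (fun t ht ↦ (hderiv t (interior_subset ht)).hasDerivWithinAt) fun t ht ↦ ?_
    linarith [hf' t (interior_subset ht)]
  refine tendsto_atBot_mono' atTop ((eventually_ge_atTop T).mono fun t ht ↦ ?_)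
    (tendsto_atBot_add_const_left _ (f T - c * T) (tendsto_id.const_mul_atTop_of_neg hc))
  have : f t - c * t ≤ f T - c * T := hanti self_mem_Ici ht ht
  simp only [id]
  linarith

theorem frequently_abs_hasDerivAt_lt {f f' : ℝ → ℝ} {L c : ℝ} (hc : 0 < c)
    (hf : ∀ᶠ t in atTop, HasDerivAt f (f' t) t) (hL : Tendsto f atTop (𝓝 L)) :
    ∃ᶠ t in atTop, |f' t| < c := by
  have hincr : Tendsto (fun t ↦ f (t + 1) - f t) atTop (𝓝 0) := by
    simpa using (hL.comp (tendsto_atTop_add_const_right _ 1 tendsto_id)).sub hL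
  refine frequently_atTop.2 fun S ↦ ?_
  obtain ⟨t, ⟨hft, hsmall⟩, hSt⟩ := (((eventually_forall_ge_atTop.2 hf).and
    (hincr.eventually (Metric.ball_mem_nhds 0 hc))).and (eventually_ge_atTop S)).exists
  obtain ⟨ξ, hξ, hslope⟩ := exists_hasDerivAt_eq_slope f f' (lt_add_one t)
    (fun s hs ↦ (hft s hs.1).continuousAt.continuousWithinAt) fun s hs ↦ hft s hs.1.le
  refine ⟨ξ, hSt.trans hξ.1.le, ?_⟩
  simpa [hslope] using hsmall

theorem eq_zero_of_tendsto_of_tendsto_hasDerivAt {f f' : ℝ → ℝ} {L m : ℝ}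
    (hf : ∀ᶠ t in atTop, HasDerivAt f (f' t) t) (hL : Tendsto f atTop (𝓝 L))
    (hm : Tendsto f' atTop (𝓝 m)) : m = 0 := by
  by_contra hm₀
  have hm_pos : 0 < |m| / 2 := by positivity
  obtain ⟨t, hsmall, hlarge⟩ := ((frequently_abs_hasDerivAt_lt hm_pos hf hL).and_eventually
    (hm.abs.eventually (lt_mem_nhds (half_lt_self (abs_pos.2 hm₀))))).exists
  exact hsmall.not_gt hlarge

theorem norm_sub_sub_smul_le_of_hasDerivWithinAt {E : Type*} [NormedAddCommGroup E]
    [NormedSpace ℝ E] {f f' : ℝ → E} {v : E} {a b C : ℝ} (hab : a ≤ b)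
    (hf : ∀ t ∈ Icc a b, HasDerivWithinAt f (f' t) (Icc a b) t)
    (hC : ∀ t ∈ Icc a b, ‖f' t - v‖ ≤ C) : ‖f b - f a - (b - a) • v‖ ≤ C * (b - a) := by
  have hmvt := (convex_Icc a b).norm_image_sub_le_of_norm_hasDerivWithin_le
    (f := fun t ↦ f t - t • v) (f' := fun t ↦ f' t - (1 : ℝ) • v)
    (fun t ht ↦ (hf t ht).sub ((hasDerivWithinAt_id t _).smul_const v))
    (fun t ht ↦ by simpa only [one_smul] using hC t ht)
    (left_mem_Icc.2 hab) (right_mem_Icc.2 hab)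
  rw [Real.norm_of_nonneg (sub_nonneg.2 hab)] at hmvt
  convert hmvt using 2
  module

/-- Barbalat's lemma. -/
theorem tendsto_zero_of_uniformContinuousOn_of_hasDerivWithinAt {E : Type*} [NormedAddCommGroup E]
    [NormedSpace ℝ E] {f f' : ℝ → E} {L : E} {T : ℝ}
    (hf : ∀ t ∈ Ici T, HasDerivWithinAt f (f' t) (Ici T) t)
    (hunif : UniformContinuousOn f' (Ici T)) (hL : Tendsto f atTop (𝓝 L)) :
    Tendsto f' atTop (𝓝 0) := by
  refine Metric.tendsto_nhds.2 fun ε hε ↦ ?_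
  obtain ⟨η, hη, hosc⟩ := Metric.uniformContinuousOn_iff.1 hunif (ε / 2) (half_pos hε)
  have hη' : 0 < η / 2 := half_pos hη
  have hincr : Tendsto (fun t ↦ f (t + η / 2) - f t) atTop (𝓝 0) := by
    simpa using (hL.comp (tendsto_atTop_add_const_right _ (η / 2) tendsto_id)).sub hL
  filter_upwards [eventually_ge_atTop T,
    (tendsto_zero_iff_norm_tendsto_zero.1 hincr).eventually
      (gt_mem_nhds (mul_pos (half_pos hε) hη'))] with t ht hsmall
  have hsub : Icc t (t + η / 2) ⊆ Ici T := Icc_subset_Ici_self.trans (Ici_subset_Ici.2 ht)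
  have hlinear : ‖f (t + η / 2) - f t - (η / 2) • f' t‖ ≤ ε / 2 * (η / 2) := by
    simpa only [add_sub_cancel_left] using norm_sub_sub_smul_le_of_hasDerivWithinAt
      (le_add_of_nonneg_right hη'.le) (fun s hs ↦ (hf s (hsub hs)).mono hsub) fun s hs ↦ by
        rw [← dist_eq_norm]
        refine (hosc s (hsub hs) t ht ?_).le
        rw [Real.dist_eq, abs_of_nonneg (by linarith [hs.1])]
        linarith [hs.2]
  have hnorm : η / 2 * ‖f' t‖ < η / 2 * ε := by
    calc η / 2 * ‖f' t‖ = ‖(η / 2) • f' t‖ := by rw [norm_smul_of_nonneg hη'.le]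
      _ ≤ ‖f (t + η / 2) - f t‖ + ‖f (t + η / 2) - f t - (η / 2) • f' t‖ := by
        simpa using norm_sub_le (f (t + η / 2) - f t) (f (t + η / 2) - f t - (η / 2) • f' t)
      _ < ε / 2 * (η / 2) + ε / 2 * (η / 2) := add_lt_add_of_lt_of_le hsmall hlinear
      _ = η / 2 * ε := by ring
  simpa using lt_of_mul_lt_mul_left hnorm hη'.le

theorem tendsto_zero_of_hasDerivWithinAt_along_isIntegralCurveOn {E E' : Type*}
    [NormedAddCommGroup E] [NormedSpace ℝ E] [NormedAddCommGroup E'] [NormedSpace ℝ E']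
    {F : E → E} {γ : ℝ → E} {K : Set E} {T : ℝ} {f : ℝ → E'} {H : E → E'} {L : E'}
    (hK : IsCompact K) (hF : ContinuousOn F K) (hH : ContinuousOn H K)
    (hγ : IsIntegralCurveOn γ (fun _ ↦ F) (Ici T)) (hγK : MapsTo γ (Ici T) K)
    (hf : ∀ t ∈ Ici T, HasDerivWithinAt f (H (γ t)) (Ici T) t) (hL : Tendsto f atTop (𝓝 L)) :
    Tendsto (fun t ↦ H (γ t)) atTop (𝓝 0) := by
  obtain ⟨C, hC⟩ := hK.exists_bound_of_continuousOn hF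
  have hlip : LipschitzOnWith C.toNNReal γ (Ici T) :=
    (convex_Ici T).lipschitzOnWith_of_nnnorm_hasDerivWithin_le hγ fun t ht ↦
      NNReal.coe_le_coe.1 ((hC _ (hγK ht)).trans C.le_coe_toNNReal)
  exact tendsto_zero_of_uniformContinuousOn_of_hasDerivWithinAt hf
    ((hK.uniformContinuousOn_of_continuous hH).comp hlip.uniformContinuousOn hγK) hL

end Calculus

section NewtonEquation

open Set Topology Metric

/-- The mechanical energy `y² / 2 + V x` of the phase point `(x, y)` in the potential `V`. -/
noncomputable def energy (V : ℝ → ℝ) (z : ℝ × ℝ) : ℝ := z.2 ^ 2 / 2 + V z.1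

/-- The vector field of the phase plane system `x' = y`, `y' = δ y - g x`, that is, of Newton's
equation `x'' = δ x' - g x` with force `-g` and linear anti-damping `δ` (damping if `δ < 0`). -/
def newtonField (δ : ℝ) (g : ℝ → ℝ) (z : ℝ × ℝ) : ℝ × ℝ := (z.2, δ * z.2 - g z.1)

/-- `w` is a solution of Newton's equation `w'' = δ w' - g w` on the whole line, and `y` is its
velocity. -/
structure IsNewtonTrajectory (δ : ℝ) (g w y : ℝ → ℝ) : Prop where
  hasDerivAt : ∀ t, HasDerivAt w (y t) t
  hasDerivAt_velocity : ∀ t, HasDerivAt y (δ * y t - g (w t)) t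

variable {δ K c L S T t t₀ : ℝ} {V g w y : ℝ → ℝ}

theorem contDiff_newtonField (hg : ContDiff ℝ 1 g) : ContDiff ℝ 1 (newtonField δ g) :=
  contDiff_snd.prodMk ((contDiff_const.mul contDiff_snd).sub (hg.comp contDiff_fst))

theorem hasDerivWithinAt_energy_of_isIntegralCurveOn (hV : ∀ x, HasDerivAt V (g x) x)
    {γ : ℝ → ℝ × ℝ} {s : Set ℝ} (hγ : IsIntegralCurveOn γ (fun _ ↦ newtonField δ g) s)
    (ht : t ∈ s) :
    HasDerivWithinAt (fun t ↦ energy V (γ t)) (δ * (γ t).2 ^ 2) s t := by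
  have h₁ : HasDerivWithinAt (fun t ↦ (γ t).1) (γ t).2 s t := (hγ t ht).fst
  have h₂ : HasDerivWithinAt (fun t ↦ (γ t).2) (δ * (γ t).2 - g (γ t).1) s t := (hγ t ht).snd
  refine (((h₂.pow 2).div_const 2).add ((hV _).comp_hasDerivWithinAt t h₁)).congr_deriv ?_
  push_cast
  ring

theorem half_sq_norm_le_energy_add (hK : ∀ x, x ^ 2 / 2 ≤ V x + K) (z : ℝ × ℝ) :
    ‖z‖ ^ 2 / 2 ≤ energy V z + K := by
  have hmax : ‖z‖ ^ 2 ≤ z.1 ^ 2 + z.2 ^ 2 := by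
    rcases max_choice ‖z.1‖ ‖z.2‖ with h | h <;>
      rw [Prod.norm_def, h, Real.norm_eq_abs, sq_abs] <;> nlinarith [sq_nonneg z.1, sq_nonneg z.2]
  unfold energy
  linarith [hK z.1]

theorem half_sq_norm_le_of_isIntegralCurveOn (hV : ∀ x, HasDerivAt V (g x) x)
    (hK : ∀ x, x ^ 2 / 2 ≤ V x + K) {γ : ℝ → ℝ × ℝ} {s : Set ℝ} (hs : Convex ℝ s)
    (hγ : IsIntegralCurveOn γ (fun _ ↦ newtonField δ g) s) (ht₀ : t₀ ∈ s) (ht : t ∈ s) :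
    ‖γ t‖ ^ 2 / 2 ≤ (energy V (γ t₀) + K) * Real.exp (2 * |δ| * |t - t₀|) := by
  refine (half_sq_norm_le_energy_add hK _).trans <|
    le_mul_exp_of_abs_deriv_le (Q := fun t ↦ energy V (γ t) + K) hs
      (fun t ht ↦ (hasDerivWithinAt_energy_of_isIntegralCurveOn hV hγ ht).add_const K)
      (fun t _ ↦ ?_) ht₀ ht
  have hkinetic : (γ t).2 ^ 2 ≤ 2 * (energy V (γ t) + K) := by
    unfold energy
    nlinarith [hK (γ t).1, sq_nonneg (γ t).1]
  rw [abs_mul, abs_of_nonneg (sq_nonneg (γ t).2)]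
  nlinarith [abs_nonneg δ]

theorem exists_isNewtonTrajectory (hg : ContDiff ℝ 1 g) (hV : ∀ x, HasDerivAt V (g x) x)
    (hK : ∀ x, x ^ 2 / 2 ≤ V x + K) (δ t₀ x₀ y₀ : ℝ) :
    ∃ w y : ℝ → ℝ, IsNewtonTrajectory δ g w y ∧ w t₀ = x₀ ∧ y t₀ = y₀ := by
  obtain ⟨γ, hγ₀, hγ⟩ : ∃ γ : ℝ → ℝ × ℝ, γ 0 = (x₀, y₀) ∧
      IsIntegralCurve γ fun _ ↦ newtonField δ g := by
    refine exists_isIntegralCurve_of_apriori_bound (contDiff_newtonField hg) fun T ↦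
      ⟨√(2 * ((energy V (x₀, y₀) + K) * Real.exp (2 * |δ| * T))) + 1, ?_⟩
    intro S hS γ hγ₀ hγ t ht
    have hbound := half_sq_norm_le_of_isIntegralCurveOn hV hK (convex_Icc _ _) hγ
      ⟨neg_nonpos.2 hS.1, hS.1⟩ ht
    rw [hγ₀, sub_zero] at hbound
    have hE₀ : 0 ≤ energy V (x₀, y₀) + K :=
      (by positivity : (0 : ℝ) ≤ _).trans (half_sq_norm_le_energy_add hK (x₀, y₀))
    refine (Real.le_sqrt_of_sq_le ?_).trans_lt (lt_add_one _)
    calc ‖γ t‖ ^ 2 = 2 * (‖γ t‖ ^ 2 / 2) := by ring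
      _ ≤ 2 * ((energy V (x₀, y₀) + K) * Real.exp (2 * |δ| * |t|)) := by gcongr
      _ ≤ 2 * ((energy V (x₀, y₀) + K) * Real.exp (2 * |δ| * T)) := by
        gcongr
        exact (abs_le.2 ht).trans hS.2
  have hγ' := hγ.comp_sub t₀
  exact ⟨fun t ↦ (γ (t - t₀)).1, fun t ↦ (γ (t - t₀)).2,
    ⟨fun t ↦ (hγ' t).fst, fun t ↦ (hγ' t).snd⟩, by simp [hγ₀], by simp [hγ₀]⟩

namespace IsNewtonTrajectory

theorem isIntegralCurve (h : IsNewtonTrajectory δ g w y) :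
    IsIntegralCurve (fun t ↦ (w t, y t)) fun _ ↦ newtonField δ g :=
  fun t ↦ (h.hasDerivAt t).prodMk (h.hasDerivAt_velocity t)

theorem continuous (h : IsNewtonTrajectory δ g w y) : Continuous w :=
  continuous_iff_continuousAt.2 fun t ↦ (h.hasDerivAt t).continuousAt

theorem continuous_velocity (h : IsNewtonTrajectory δ g w y) : Continuous y :=
  continuous_iff_continuousAt.2 fun t ↦ (h.hasDerivAt_velocity t).continuousAt

theorem contDiff (h : IsNewtonTrajectory δ g w y) (hg : Continuous g) : ContDiff ℝ 2 w := by
  have hderiv : deriv w = y := funext fun t ↦ (h.hasDerivAt t).deriv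
  have hderiv_velocity : deriv y = fun t ↦ δ * y t - g (w t) :=
    funext fun t ↦ (h.hasDerivAt_velocity t).deriv
  have hy : ContDiff ℝ 1 y := contDiff_one_iff_deriv.2
    ⟨fun t ↦ (h.hasDerivAt_velocity t).differentiableAt, hderiv_velocity ▸
      (h.continuous_velocity.const_mul δ).sub (hg.comp h.continuous)⟩
  rw [← one_add_one_eq_two, contDiff_succ_iff_deriv, hderiv]
  exact ⟨fun t ↦ (h.hasDerivAt t).differentiableAt, by simp, hy⟩

theorem comp_neg (h : IsNewtonTrajectory δ g w y) :
    IsNewtonTrajectory (-δ) g (fun t ↦ w (-t)) fun t ↦ -y (-t) where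
  hasDerivAt t := by
    simpa [Function.comp_def] using (h.hasDerivAt (-t)).comp t (hasDerivAt_neg t)
  hasDerivAt_velocity t := by
    simpa using ((h.hasDerivAt_velocity (-t)).comp t (hasDerivAt_neg t)).fun_neg

theorem neg (h : IsNewtonTrajectory δ g w y) :
    IsNewtonTrajectory δ (fun x ↦ -g (-x)) (fun t ↦ -w t) fun t ↦ -y t where
  hasDerivAt t := (h.hasDerivAt t).neg
  hasDerivAt_velocity t := (h.hasDerivAt_velocity t).neg.congr_deriv (by rw [neg_neg]; ring)

theorem hasDerivAt_energy (h : IsNewtonTrajectory δ g w y) (hV : ∀ x, HasDerivAt V (g x) x)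
    (t : ℝ) : HasDerivAt (fun t ↦ energy V (w t, y t)) (δ * y t ^ 2) t := by
  simpa using hasDerivWithinAt_energy_of_isIntegralCurveOn hV
    (h.isIntegralCurve.isIntegralCurveOn univ) (mem_univ t)

theorem monotone_energy (h : IsNewtonTrajectory δ g w y) (hV : ∀ x, HasDerivAt V (g x) x)
    (hδ : 0 ≤ δ) : Monotone fun t ↦ energy V (w t, y t) :=
  monotone_of_hasDerivAt_nonneg (h.hasDerivAt_energy hV) fun _ ↦ by positivity

theorem antitone_energy (h : IsNewtonTrajectory δ g w y) (hV : ∀ x, HasDerivAt V (g x) x)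
    (hδ : δ ≤ 0) : Antitone fun t ↦ energy V (w t, y t) :=
  antitone_of_hasDerivAt_nonpos (h.hasDerivAt_energy hV)
    fun _ ↦ mul_nonpos_of_nonpos_of_nonneg hδ (sq_nonneg _)

theorem energy_lt_energy (h : IsNewtonTrajectory δ g w y) (hV : ∀ x, HasDerivAt V (g x) x)
    (hδ : 0 < δ) (hST : S < T) (ht : t ∈ Icc S T) (hy : y t ≠ 0) :
    energy V (w S, y S) < energy V (w T, y T) :=
  lt_of_monotone_of_hasDerivAt_ne_zero (h.monotone_energy hV hδ.le) hST ht
    (h.hasDerivAt_energy hV t) (by positivity)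

theorem eq_of_energy_eq (h : IsNewtonTrajectory δ g w y) (hV : ∀ x, HasDerivAt V (g x) x)
    (hδ : 0 < δ) (hE : energy V (w S, y S) = energy V (w T, y T)) (hy : y S ≠ 0) : S = T := by
  rcases lt_trichotomy S T with hlt | heq | hgt
  · exact absurd hE (h.energy_lt_energy hV hδ hlt (left_mem_Icc.2 hlt.le) hy).ne
  · exact heq
  · exact absurd hE (h.energy_lt_energy hV hδ hgt (right_mem_Icc.2 hgt.le) hy).ne'

theorem exists_abs_le_mul_exp (h : IsNewtonTrajectory δ g w y) (hV : ∀ x, HasDerivAt V (g x) x)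
    (hK : ∀ x, x ^ 2 / 2 ≤ V x + K) : ∃ C, ∀ t, |w t| ≤ C * Real.exp (|δ| * |t|) := by
  refine ⟨√(2 * (energy V (w 0, y 0) + K)), fun t ↦ ?_⟩
  have hbound : ‖(w t, y t)‖ ^ 2 / 2 ≤
      (energy V (w 0, y 0) + K) * Real.exp (2 * |δ| * |t - 0|) :=
    half_sq_norm_le_of_isIntegralCurveOn hV hK convex_univ
      (h.isIntegralCurve.isIntegralCurveOn univ) (mem_univ 0) (mem_univ t)
  have hw : |w t| ≤ ‖(w t, y t)‖ := norm_fst_le (w t, y t)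
  have hexp : Real.exp (2 * |δ| * |t - 0|) = Real.exp (|δ| * |t|) ^ 2 := by
    rw [← Real.exp_nat_mul]; congr 1; push_cast; ring_nf
  rw [← Real.sqrt_sq (Real.exp_pos _).le, ← Real.sqrt_mul' _ (sq_nonneg _)]
  refine Real.le_sqrt_of_sq_le ?_
  calc |w t| ^ 2 ≤ ‖(w t, y t)‖ ^ 2 := by gcongr
    _ ≤ 2 * (energy V (w 0, y 0) + K) * Real.exp (|δ| * |t|) ^ 2 := by
      rw [hexp] at hbound; linarith

section Equilibria

theorem energy_le_of_tendsto (h : IsNewtonTrajectory δ g w y) (hV : ∀ x, HasDerivAt V (g x) x)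
    (hδ : 0 ≤ δ) (hL : Tendsto w atTop (𝓝 L)) (t : ℝ) : energy V (w t, y t) ≤ V L := by
  refine le_of_forall_pos_lt_add fun ε hε ↦ ?_
  have hVw : ∀ᶠ s in atTop, V (w s) < V L + ε / 2 :=
    ((hV L).continuousAt.tendsto.comp hL).eventually (gt_mem_nhds (by linarith))
  obtain ⟨s, hys, hVs, hts⟩ := ((frequently_abs_hasDerivAt_lt (Real.sqrt_pos.2 hε)
    (.of_forall h.hasDerivAt) hL).and_eventually (hVw.and (eventually_ge_atTop t))).exists
  have hkinetic : y s ^ 2 < ε := by simpa using (Real.lt_sqrt (abs_nonneg _)).1 hys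
  calc energy V (w t, y t) ≤ energy V (w s, y s) := h.monotone_energy hV hδ hts
    _ < V L + ε := by simp only [energy]; linarith

theorem apply_eq_zero_of_tendsto (h : IsNewtonTrajectory δ g w y) (hV : ∀ x, HasDerivAt V (g x) x)
    (hg : Continuous g) (hδ : 0 ≤ δ) (hL : Tendsto w atTop (𝓝 L)) : g L = 0 := by
  have hkinetic : Tendsto (fun t ↦ y t ^ 2) atTop (𝓝 0) := by
    refine squeeze_zero (g := fun t ↦ 2 * (V L - V (w t))) (fun t ↦ sq_nonneg _) (fun t ↦ ?_) ?_
    · have := h.energy_le_of_tendsto hV hδ hL t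
      simp only [energy] at this
      linarith
    · simpa using (((hV L).continuousAt.tendsto.comp hL).const_sub (V L)).const_mul 2
  have hy : Tendsto y atTop (𝓝 0) := tendsto_zero_of_tendsto_sq hkinetic
  have hacc : Tendsto (fun t ↦ δ * y t - g (w t)) atTop (𝓝 (-g L)) := by
    simpa using (hy.const_mul δ).sub ((hg.tendsto L).comp hL)
  exact neg_eq_zero.1 <|
    eq_zero_of_tendsto_of_tendsto_hasDerivAt (.of_forall h.hasDerivAt_velocity) hy hacc

theorem tendsto_apply_atTop_zero (h : IsNewtonTrajectory δ g w y)
    (hV : ∀ x, HasDerivAt V (g x) x) (hg : Continuous g) (hK : ∀ x, x ^ 2 / 2 ≤ V x + K)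
    (hδ : δ < 0) : Tendsto (fun t ↦ g (w t)) atTop (𝓝 0) := by
  have hanti := h.antitone_energy hV hδ.le
  have hcoer := fun t ↦ half_sq_norm_le_energy_add hK (w t, y t)
  have hmaps : MapsTo (fun t ↦ (w t, y t)) (Ici 0)
      (closedBall 0 (√(2 * (energy V (w 0, y 0) + K)))) := fun t ht ↦ by
    rw [mem_closedBall_zero_iff]
    exact Real.le_sqrt_of_sq_le (by linarith [hcoer t, hanti ht])
  obtain ⟨E₁, hE₁⟩ := exists_tendsto_of_antitoneOn_Ici (hanti.antitoneOn (Ici 0)) (m := -K)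
    fun t _ ↦ by linarith [hcoer t, sq_nonneg ‖(w t, y t)‖]
  have hcurve := h.isIntegralCurve.isIntegralCurveOn (Ici 0)
  have hfield : Continuous (newtonField δ g) := by unfold newtonField; fun_prop
  have hdissipation : Tendsto (fun t ↦ δ * y t ^ 2) atTop (𝓝 0) :=
    tendsto_zero_of_hasDerivWithinAt_along_isIntegralCurveOn
      (H := fun z : ℝ × ℝ ↦ δ * z.2 ^ 2) (isCompact_closedBall _ _)
      hfield.continuousOn (by fun_prop) hcurve hmaps
      (fun t _ ↦ (h.hasDerivAt_energy hV t).hasDerivWithinAt) hE₁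
  have hy : Tendsto y atTop (𝓝 0) :=
    tendsto_zero_of_tendsto_sq (by simpa [hδ.ne] using hdissipation.const_mul δ⁻¹)
  have hacc : Tendsto (fun t ↦ δ * y t - g (w t)) atTop (𝓝 0) :=
    tendsto_zero_of_hasDerivWithinAt_along_isIntegralCurveOn
      (H := fun z : ℝ × ℝ ↦ δ * z.2 - g z.1) (isCompact_closedBall _ _)
      hfield.continuousOn (by fun_prop) hcurve hmaps
      (fun t _ ↦ (h.hasDerivAt_velocity t).hasDerivWithinAt) hy
  simpa using (hy.const_mul δ).sub hacc

theorem tendsto_apply_atBot_zero (h : IsNewtonTrajectory δ g w y)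
    (hV : ∀ x, HasDerivAt V (g x) x) (hg : Continuous g) (hK : ∀ x, x ^ 2 / 2 ≤ V x + K)
    (hδ : 0 < δ) : Tendsto (fun t ↦ g (w t)) atBot (𝓝 0) := by
  simpa [Function.comp_def] using
    (h.comp_neg.tendsto_apply_atTop_zero hV hg hK (neg_lt_zero.2 hδ)).comp tendsto_neg_atBot_atTop

end Equilibria

section Oscillation

theorem eventually_velocity_neg_of_tendsto_atTop (h : IsNewtonTrajectory δ g w y)
    (hc : δ ^ 2 / 4 < c) (hgrowth : ∀ᶠ x in atTop, c * x ≤ g x) (hw : Tendsto w atTop atTop) :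
    ∀ᶠ t in atTop, y t < 0 := by
  obtain ⟨T, hT⟩ := eventually_atTop.1 ((hw.eventually hgrowth).and (hw.eventually_gt_atTop 0))
  -- The slope `p = y / w` satisfies the Riccati equation `p' = δ p - p² - g(w) / w`.
  have hslope : Tendsto (fun t ↦ y t / w t) atTop atBot := by
    refine tendsto_atBot_of_hasDerivAt_le (sub_neg.2 hc) (fun t ht ↦
      (h.hasDerivAt_velocity t).div (h.hasDerivAt t) (hT t ht).2.ne') fun t ht ↦ ?_
    obtain ⟨hgt, hwt⟩ := hT t ht
    calc ((δ * y t - g (w t)) * w t - y t * y t) / w t ^ 2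
        = δ * (y t / w t) - (y t / w t) ^ 2 - g (w t) / w t := by
          field_simp
          ring
      _ ≤ δ * (y t / w t) - (y t / w t) ^ 2 - c := by gcongr; exact (le_div_iff₀ hwt).2 hgt
      _ ≤ δ ^ 2 / 4 - c := by nlinarith [sq_nonneg (y t / w t - δ / 2)]
  filter_upwards [hslope.eventually_lt_atBot 0, eventually_ge_atTop T] with t hneg ht
  exact (div_neg_iff.1 hneg).elim (fun h ↦ absurd h.2 (hT t ht).2.not_gt) And.left

theorem antitoneOn_Ici (h : IsNewtonTrajectory δ g w y) (hy : ∀ t ≥ T, y t ≤ 0) :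
    AntitoneOn w (Ici T) :=
  antitoneOn_of_hasDerivWithinAt_nonpos (convex_Ici T) h.continuous.continuousOn
    (fun t _ ↦ (h.hasDerivAt t).hasDerivWithinAt) fun t ht ↦ hy t (interior_subset ht)

theorem not_tendsto_atTop (h : IsNewtonTrajectory δ g w y) (hc : δ ^ 2 / 4 < c)
    (hgrowth : ∀ᶠ x in atTop, c * x ≤ g x) : ¬ Tendsto w atTop atTop := by
  intro hw
  obtain ⟨T, hT⟩ :=
    eventually_atTop.1 (h.eventually_velocity_neg_of_tendsto_atTop hc hgrowth hw)
  have hanti := h.antitoneOn_Ici fun t ht ↦ (hT t ht).le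
  obtain ⟨t, hwt, ht⟩ := ((hw.eventually_gt_atTop (w T)).and (eventually_ge_atTop T)).exists
  exact hwt.not_ge (hanti self_mem_Ici ht ht)

theorem not_tendsto_nhds_of_energy_pos (h : IsNewtonTrajectory δ g w y)
    (hV : ∀ x, HasDerivAt V (g x) x) (hg : Continuous g) (hδ : 0 ≤ δ)
    (hpos : ∀ x, 0 < V x → 0 < x * g x) (hE : 0 < energy V (w S, y S)) (L : ℝ) :
    ¬ Tendsto w atTop (𝓝 L) := fun hL ↦ by
  have hVL := hpos L (hE.trans_le (h.energy_le_of_tendsto hV hδ hL S))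
  simp [h.apply_eq_zero_of_tendsto hV hg hδ hL] at hVL

theorem velocity_nonpos_of_le (h : IsNewtonTrajectory δ g w y)
    (hV : ∀ x, HasDerivAt V (g x) x) (hδ : 0 ≤ δ) (hpos : ∀ x, 0 < V x → 0 < x * g x)
    (hw : ∀ t ≥ S, 0 < w t) (hE : 0 < energy V (w S, y S)) (hST : S ≤ T) (hyT : y T ≤ 0) :
    ∀ t ≥ T, y t ≤ 0 := by
  intro t ht
  refine image_le_of_deriv_right_lt_deriv_boundary (B := fun _ ↦ 0) (B' := fun _ ↦ 0)
    h.continuous_velocity.continuousOn (fun s _ ↦ (h.hasDerivAt_velocity s).hasDerivWithinAt) hyT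
    (fun s ↦ hasDerivAt_const s 0) (fun s hs hys ↦ ?_) (right_mem_Icc.2 ht)
  have hSs : S ≤ s := hST.trans hs.1
  have hVs : 0 < V (w s) := by
    simpa [energy, hys] using hE.trans_le (h.monotone_energy hV hδ hSs)
  simpa [hys] using pos_of_mul_pos_right (hpos _ hVs) (hw s hSs).le

theorem exists_nonpos_of_energy_pos (h : IsNewtonTrajectory δ g w y)
    (hV : ∀ x, HasDerivAt V (g x) x) (hg : Continuous g) (hδ : 0 ≤ δ)
    (hpos : ∀ x, 0 < V x → 0 < x * g x) (hc : δ ^ 2 / 4 < c)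
    (hgrowth : ∀ᶠ x in atTop, c * x ≤ g x) (hE : 0 < energy V (w S, y S)) :
    ∃ t ≥ S, w t ≤ 0 := by
  by_contra! hw
  have hnolim := h.not_tendsto_nhds_of_energy_pos hV hg hδ hpos hE
  by_cases hturn : ∃ T ≥ S, y T ≤ 0
  · obtain ⟨T, hST, hyT⟩ := hturn
    obtain ⟨L, hL⟩ := exists_tendsto_of_antitoneOn_Ici
      (h.antitoneOn_Ici (h.velocity_nonpos_of_le hV hδ hpos hw hE hST hyT))
      fun t ht ↦ (hw t (hST.trans ht)).le
    exact hnolim L hL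
  · push Not at hturn
    have hmono : MonotoneOn w (Ici S) :=
      monotoneOn_of_hasDerivWithinAt_nonneg (convex_Ici S) h.continuous.continuousOn
        (fun t _ ↦ (h.hasDerivAt t).hasDerivWithinAt) fun t ht ↦ (hturn t (interior_subset ht)).le
    rcases tendsto_atTop_or_exists_tendsto_of_monotoneOn_Ici hmono with htop | ⟨L, hL⟩
    · exact h.not_tendsto_atTop hc hgrowth htop
    · exact hnolim L hL

theorem exists_zero_of_energy_pos (h : IsNewtonTrajectory δ g w y)
    (hV : ∀ x, HasDerivAt V (g x) x) (hg : Continuous g) (hδ : 0 ≤ δ)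
    (hpos : ∀ x, 0 < V x → 0 < x * g x) (hc : δ ^ 2 / 4 < c)
    (hgrowth_top : ∀ᶠ x in atTop, c * x ≤ g x) (hgrowth_bot : ∀ᶠ x in atBot, g x ≤ c * x)
    (hE : 0 < energy V (w S, y S)) : ∃ t ≥ S, w t = 0 := by
  obtain ⟨t₁, ht₁, hw₁⟩ := h.exists_nonpos_of_energy_pos hV hg hδ hpos hc hgrowth_top hE
  obtain ⟨t₂, ht₂, hw₂⟩ := h.neg.exists_nonpos_of_energy_pos (V := fun x ↦ V (-x))
    (fun x ↦ by simpa [Function.comp_def] using (hV (-x)).comp x (hasDerivAt_neg x))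
    (by fun_prop) hδ (fun x hx ↦ by simpa using hpos (-x) hx) hc
    ((tendsto_neg_atTop_atBot.eventually hgrowth_bot).mono fun x hx ↦ by linarith)
    (by simpa [energy] using hE)
  exact isPreconnected_Ici.intermediate_value ht₁ ht₂ h.continuous.continuousOn
    ⟨hw₁, neg_nonpos.1 hw₂⟩

theorem exists_neg_of_apply_eq_zero (h : IsNewtonTrajectory δ g w y) (hw : w t = 0)
    (hy : y t ≠ 0) : ∃ s, w s < 0 := by
  by_contra! hnonneg
  have hmin : IsLocalMin w t := .of_forall fun s ↦ hw.trans_le (hnonneg s)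
  exact hy (hmin.hasDerivAt_eq_zero (h.hasDerivAt t))

end Oscillation

section PotentialWell

theorem pos_of_energy_neg (h : IsNewtonTrajectory δ g w y) (hV₀ : V 0 = 0) (hw : 0 < w t₀)
    (hE : ∀ t < t₀, energy V (w t, y t) < 0) : ∀ t ≤ t₀, 0 < w t := by
  intro t ht
  by_contra! hwt
  obtain ⟨s, hs, hws⟩ := intermediate_value_Icc ht h.continuous.continuousOn ⟨hwt, hw.le⟩
  have hEs := hE s (hs.2.lt_of_ne fun heq ↦ hw.ne' (heq ▸ hws))
  simp only [energy, hws, hV₀, add_zero] at hEs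
  exact hEs.not_ge (by positivity)

theorem tendsto_atBot_of_energy_eq_zero {p : ℝ} (h : IsNewtonTrajectory δ g w y)
    (hV : ∀ x, HasDerivAt V (g x) x) (hg : Continuous g) (hK : ∀ x, x ^ 2 / 2 ≤ V x + K)
    (hδ : 0 < δ) (hV₀ : V 0 = 0) (hp : ∀ x, 0 < x → g x = 0 → x = p)
    (hE : energy V (w t₀, y t₀) = 0) (hw : 0 < w t₀) (hy : y t₀ ≠ 0) :
    Tendsto w atBot (𝓝 p) := by
  have hneg : ∀ t < t₀, energy V (w t, y t) < 0 := fun t ht ↦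
    hE ▸ h.energy_lt_energy hV hδ ht (right_mem_Icc.2 ht.le) hy
  let e := energy V (w (t₀ - 1), y (t₀ - 1))
  have he : e < 0 := hneg _ (sub_one_lt t₀)
  let well : Set ℝ := {x | 0 ≤ x ∧ V x ≤ e}
  have hwell : IsCompact well := by
    have hVc : Continuous V := continuous_iff_continuousAt.2 fun x ↦ (hV x).continuousAt
    refine isCompact_Icc.of_isClosed_subset (s := Icc 0 √(2 * (e + K)))
      (isClosed_Ici.inter (isClosed_le hVc continuous_const)) fun x hx ↦ ⟨hx.1, ?_⟩
    exact Real.le_sqrt_of_sq_le (by linarith [hK x, hx.2])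
  have hmem : ∀ᶠ t in atBot, w t ∈ well := by
    filter_upwards [eventually_le_atBot (t₀ - 1)] with t ht
    refine ⟨(h.pos_of_energy_neg hV₀ hw hneg t (ht.trans (sub_one_lt t₀).le)).le, ?_⟩
    have hEt : energy V (w t, y t) ≤ e := h.monotone_energy hV hδ.le ht
    simp only [energy] at hEt
    linarith [sq_nonneg (y t)]
  refine hwell.tendsto_nhds_of_unique_mapClusterPt hmem fun x hx hcluster ↦ hp x ?_ ?_
  · refine hx.1.lt_of_ne fun hx₀ ↦ (hx.2.trans_lt he).ne ?_
    rw [← hx₀, hV₀]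
  · exact eq_of_nhds_neBot <| (hcluster.continuousAt_comp hg.continuousAt).clusterPt.mono
      (h.tendsto_apply_atBot_zero hV hg hK hδ)

end PotentialWell

end IsNewtonTrajectory

end NewtonEquation

section EmdenFowler

open Topology

/-- The double-well potential of the Emden–Fowler equation, with minima at `±1`. -/
noncomputable def emdenPotential (α β x : ℝ) : ℝ := β * (|x| ^ (α + 2) / (α + 2) - x ^ 2 / 2)

/-- The nonlinearity of the Emden–Fowler equation, which is the gradient of `emdenPotential`. -/
noncomputable def emdenNonlinearity (α β x : ℝ) : ℝ := β * (|x| ^ α * x - x)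

variable {α β x : ℝ}

theorem hasDerivAt_abs_rpow_mul_self (hα : 0 < α) (x : ℝ) :
    HasDerivAt (fun x : ℝ ↦ |x| ^ α * x) ((α + 1) * |x| ^ α) x := by
  rcases eq_or_ne x 0 with rfl | hx
  · have hcont : Tendsto (fun x : ℝ ↦ |x| ^ α) (𝓝[≠] 0) (𝓝 0) := by
      simpa [Real.zero_rpow hα.ne'] using
        ((continuous_abs.rpow_const fun _ ↦ .inr hα.le).tendsto (0 : ℝ)).mono_left
          nhdsWithin_le_nhds
    rw [hasDerivAt_iff_tendsto_slope, abs_zero, Real.zero_rpow hα.ne', mul_zero]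
    refine hcont.congr' (eventually_mem_nhdsWithin.mono fun y (hy : y ≠ 0) ↦ ?_)
    simp [slope_def_field, hy]
  · have hx' := abs_ne_zero.2 hx
    refine (((hasDerivAt_abs hx).rpow_const (p := α) (.inl hx')).mul
      (hasDerivAt_id x)).congr_deriv ?_
    calc SignType.sign x * α * |x| ^ (α - 1) * x + |x| ^ α * 1
        = α * (|x| ^ (α - 1) * (SignType.sign x * x)) + |x| ^ α := by ring
      _ = (α + 1) * |x| ^ α := by
        rw [sign_mul_self, ← Real.rpow_add_one hx', sub_add_cancel]; ring

theorem contDiff_emdenNonlinearity (hα : 0 < α) (β : ℝ) :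
    ContDiff ℝ 1 (emdenNonlinearity α β) := by
  have hderiv : deriv (fun x : ℝ ↦ |x| ^ α * x) = fun x ↦ (α + 1) * |x| ^ α :=
    funext fun x ↦ (hasDerivAt_abs_rpow_mul_self hα x).deriv
  have hpower : ContDiff ℝ 1 fun x : ℝ ↦ |x| ^ α * x := contDiff_one_iff_deriv.2
    ⟨fun x ↦ (hasDerivAt_abs_rpow_mul_self hα x).differentiableAt, hderiv ▸
      (continuous_abs.rpow_const fun _ ↦ .inr hα.le).const_mul (α + 1)⟩
  exact contDiff_const.mul (hpower.sub contDiff_id)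

theorem hasDerivAt_emdenPotential (hα : 0 < α) (β x : ℝ) :
    HasDerivAt (emdenPotential α β) (emdenNonlinearity α β x) x := by
  have hpower := (hasDerivAt_abs_rpow x (p := α + 2) (by linarith)).div_const (α + 2)
  refine ((hpower.sub (((hasDerivAt_id x).pow 2).div_const 2)).const_mul β).congr_deriv ?_
  have : α + 2 ≠ 0 := by positivity
  simp only [emdenNonlinearity, id, add_sub_cancel_right]
  field_simp
  push_cast
  ring

theorem emdenPotential_eq_sq_mul (hα : 0 < α) (β x : ℝ) :
    emdenPotential α β x = β * x ^ 2 * (|x| ^ α / (α + 2) - 1 / 2) := by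
  have hpow : |x| ^ (α + 2) = |x| ^ α * x ^ 2 := by
    rw [Real.rpow_add' (abs_nonneg x) (by positivity), Real.rpow_two, sq_abs]
  rw [emdenPotential, hpow]
  ring

theorem emdenPotential_zero (hα : 0 < α) : emdenPotential α β 0 = 0 := by
  simp [emdenPotential_eq_sq_mul hα]

theorem eventually_le_abs_rpow_cocompact (hα : 0 < α) (M : ℝ) :
    ∀ᶠ x : ℝ in cocompact ℝ, M ≤ |x| ^ α :=
  ((tendsto_rpow_atTop hα).comp (tendsto_norm_cocompact_atTop (E := ℝ))).eventually_ge_atTop M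

theorem exists_half_sq_le_emdenPotential_add (hα : 0 < α) (hβ : 0 < β) :
    ∃ K, ∀ x, x ^ 2 / 2 ≤ emdenPotential α β x + K := by
  have hcont : Continuous fun x ↦ emdenPotential α β x - x ^ 2 / 2 :=
    (continuous_iff_continuousAt.2 fun x ↦
      (hasDerivAt_emdenPotential hα β x).continuousAt).sub (by fun_prop)
  obtain ⟨x₀, hmin⟩ := hcont.exists_forall_le' 0 <| by
    filter_upwards [eventually_le_abs_rpow_cocompact hα ((α + 2) * ((1 / β + 1) / 2))] with x hx
    have hfactor : (1 / β + 1) / 2 ≤ |x| ^ α / (α + 2) := (le_div_iff₀' (by positivity)).2 hx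
    calc emdenPotential α β 0 - 0 ^ 2 / 2 = β * x ^ 2 * ((1 / β + 1) / 2 - 1 / 2) - x ^ 2 / 2 := by
          rw [emdenPotential_zero hα]; field_simp; ring
      _ ≤ emdenPotential α β x - x ^ 2 / 2 := by
          rw [emdenPotential_eq_sq_mul hα]; gcongr
  exact ⟨-(emdenPotential α β x₀ - x₀ ^ 2 / 2), fun x ↦ by linarith [hmin x]⟩

theorem mul_emdenNonlinearity_pos_of_emdenPotential_pos (hα : 0 < α) (hβ : 0 < β)
    (hx : 0 < emdenPotential α β x) : 0 < x * emdenNonlinearity α β x := by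
  rw [emdenPotential_eq_sq_mul hα] at hx
  have hfactor : 1 / 2 < |x| ^ α / (α + 2) := sub_pos.1 (pos_of_mul_pos_right hx (by positivity))
  have hx₀ : x ≠ 0 := by rintro rfl; simp at hx
  have hlarge : 1 < |x| ^ α := by
    rw [lt_div_iff₀ (by positivity)] at hfactor
    linarith
  calc 0 < β * (x ^ 2 * (|x| ^ α - 1)) := by have := sub_pos.2 hlarge; positivity
    _ = x * emdenNonlinearity α β x := by rw [emdenNonlinearity]; ring

theorem eq_one_of_emdenNonlinearity_eq_zero (hα : α ≠ 0) (hβ : β ≠ 0) (hx : 0 < x)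
    (h : emdenNonlinearity α β x = 0) : x = 1 := by
  have hpow : x ^ α * x = 1 * x := by
    simpa [emdenNonlinearity, hβ, sub_eq_zero, abs_of_pos hx] using h
  exact (Real.rpow_left_inj hx.le zero_le_one hα).1 <| by
    rw [mul_right_cancel₀ hx.ne' hpow, Real.one_rpow]

theorem eventually_mul_le_emdenNonlinearity_atTop (hα : 0 < α) (hβ : 0 < β) (c : ℝ) :
    ∀ᶠ x in atTop, c * x ≤ emdenNonlinearity α β x := by
  filter_upwards [atTop_le_cocompact (eventually_le_abs_rpow_cocompact hα (c / β + 1)),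
    eventually_ge_atTop 0] with x hlarge hx
  calc c * x = β * x * (c / β + 1 - 1) := by field_simp; ring
    _ ≤ β * x * (|x| ^ α - 1) := by gcongr
    _ = emdenNonlinearity α β x := by rw [emdenNonlinearity]; ring

theorem emdenNonlinearity_neg (α β x : ℝ) :
    emdenNonlinearity α β (-x) = -emdenNonlinearity α β x := by
  simp only [emdenNonlinearity, abs_neg]
  ring

theorem eventually_emdenNonlinearity_le_mul_atBot (hα : 0 < α) (hβ : 0 < β) (c : ℝ) :
    ∀ᶠ x in atBot, emdenNonlinearity α β x ≤ c * x :=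
  (tendsto_neg_atBot_atTop.eventually
    (eventually_mul_le_emdenNonlinearity_atTop hα hβ c)).mono fun x hx ↦ by
      rw [emdenNonlinearity_neg] at hx
      linarith

end EmdenFowler

section EmdenTransform

open Set Topology

/-- `u` is a `C²` solution on `(0, ∞)` of `u'' + ((n - 1) / r) u' + |u|^α u = 0`, the equation of
radial stationary solutions of the nonlinear heat equation in dimension `n`. -/
structure IsRadialSolution (n α : ℝ) (u : ℝ → ℝ) : Prop where
  contDiffOn : ContDiffOn ℝ 2 u (Ioi 0)
  equation : ∀ r, 0 < r → deriv (deriv u) r + (n - 1) / r * deriv u r + |u r| ^ α * u r = 0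

/-- The radial profile `r ↦ β^(1/α) r^(-2/α) w(log r)` obtained from a function `w` of logarithmic
time `t = log r` by the Emden–Fowler change of variables. -/
noncomputable def emdenProfile (α β : ℝ) (w : ℝ → ℝ) (r : ℝ) : ℝ :=
  β ^ (1 / α) * (r ^ (-(2 / α)) * w (Real.log r))

/-- The Cauchy data `u r₀ = a β^(1/α) r₀^(-2/α)` and `u' r₀ = -b β^(1/α) r₀^(-2/α-1)` at `r₀`,
normalized by the scaling of the singular solution `β^(1/α) r^(-2/α)`. -/
def HasEmdenData (α β : ℝ) (u : ℝ → ℝ) (r₀ a b : ℝ) : Prop :=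
  u r₀ = a * β ^ (1 / α) * r₀ ^ (-(2 / α)) ∧
    deriv u r₀ = -b * β ^ (1 / α) * r₀ ^ (-(2 / α) - 1)

variable {n α β r a b : ℝ} {u v w : ℝ → ℝ}

theorem IsRadialSolution.congr (hu : IsRadialSolution n α u) (huv : EqOn u v (Ioi 0)) :
    IsRadialSolution n α v where
  contDiffOn := hu.contDiffOn.congr fun r hr ↦ (huv hr).symm
  equation r hr := by
    have hev : v =ᶠ[𝓝 r] u := (huv.eventuallyEq_of_mem (Ioi_mem_nhds hr)).symm
    rw [hev.deriv.deriv_eq, hev.deriv_eq, hev.eq_of_nhds]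
    exact hu.equation r hr

theorem HasEmdenData.congr (hu : HasEmdenData α β u r a b) (huv : EqOn u v (Ioi 0)) (hr : 0 < r) :
    HasEmdenData α β v r a b :=
  ⟨huv hr ▸ hu.1, (huv.eventuallyEq_of_mem (Ioi_mem_nhds hr)).deriv_eq ▸ hu.2⟩

theorem hasDerivAt_rpow_mul_comp_log {f : ℝ → ℝ} {f' p : ℝ} (hr : 0 < r)
    (hf : HasDerivAt f f' (Real.log r)) :
    HasDerivAt (fun r ↦ r ^ p * f (Real.log r))
      (r ^ (p - 1) * (f' + p * f (Real.log r))) r := by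
  refine ((Real.hasDerivAt_rpow_const (p := p) (.inl hr.ne')).mul
    (hf.comp r (Real.hasDerivAt_log hr.ne'))).congr_deriv ?_
  have hpow : r ^ p = r ^ (p - 1) * r := by rw [← Real.rpow_add_one hr.ne', sub_add_cancel]
  rw [Function.comp_apply, hpow]
  field_simp
  ring

theorem deriv_emdenProfile (hw : Differentiable ℝ w) (hr : 0 < r) :
    deriv (emdenProfile α β w) r = β ^ (1 / α) * (r ^ (-(2 / α) - 1) *
      (deriv w (Real.log r) - 2 / α * w (Real.log r))) :=
  ((hasDerivAt_rpow_mul_comp_log hr (hw _).hasDerivAt).const_mul _).deriv.trans (by ring)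

theorem deriv_deriv_emdenProfile (hw : ContDiff ℝ 2 w) (hr : 0 < r) :
    deriv (deriv (emdenProfile α β w)) r = β ^ (1 / α) * (r ^ (-(2 / α) - 1 - 1) *
      (deriv (deriv w) (Real.log r) - 2 / α * deriv w (Real.log r) +
        (-(2 / α) - 1) * (deriv w (Real.log r) - 2 / α * w (Real.log r)))) := by
  have hw₁ : Differentiable ℝ w := hw.differentiable two_ne_zero
  have hw₂ : Differentiable ℝ (deriv w) := hw.differentiable_deriv_two
  have hev : deriv (emdenProfile α β w) =ᶠ[𝓝 r] fun r ↦ β ^ (1 / α) * (r ^ (-(2 / α) - 1) *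
      (deriv w (Real.log r) - 2 / α * w (Real.log r))) :=
    (lt_mem_nhds hr).mono fun s hs ↦ deriv_emdenProfile hw₁ hs
  rw [hev.deriv_eq]
  exact ((hasDerivAt_rpow_mul_comp_log (f := fun t ↦ deriv w t - 2 / α * w t) hr
    ((hw₂ _).hasDerivAt.sub ((hw₁ _).hasDerivAt.const_mul _))).const_mul _).deriv

theorem abs_emdenProfile_rpow (hα : 0 < α) (hβ : 0 < β) (hr : 0 < r) :
    |emdenProfile α β w r| ^ α = β * (r ^ 2)⁻¹ * |w (Real.log r)| ^ α := by
  have hamplitude : (β ^ (1 / α)) ^ α = β := by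
    rw [← Real.rpow_mul hβ.le, one_div_mul_cancel hα.ne', Real.rpow_one]
  have hscale : (r ^ (-(2 / α))) ^ α = (r ^ 2)⁻¹ := by
    rw [← Real.rpow_mul hr.le, neg_mul, div_mul_cancel₀ _ hα.ne', Real.rpow_neg hr.le,
      Real.rpow_two]
  rw [emdenProfile, abs_mul, abs_mul, abs_of_pos (Real.rpow_pos_of_pos hβ _),
    abs_of_pos (Real.rpow_pos_of_pos hr _), Real.mul_rpow (by positivity) (by positivity),
    Real.mul_rpow (by positivity) (by positivity), hamplitude, hscale, mul_assoc]

theorem radial_equation_emdenProfile (hα : 0 < α) (hβ₀ : 0 < β)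
    (hβ : β = 2 / α * (n - 2 - 2 / α)) (hw : ContDiff ℝ 2 w) (hr : 0 < r) :
    deriv (deriv (emdenProfile α β w)) r + (n - 1) / r * deriv (emdenProfile α β w) r +
        |emdenProfile α β w r| ^ α * emdenProfile α β w r =
      β ^ (1 / α) * r ^ (-(2 / α) - 1 - 1) * (deriv (deriv w) (Real.log r) -
        ((4 / α - (n - 2)) * deriv w (Real.log r) - emdenNonlinearity α β (w (Real.log r)))) := by
  have hpow : r ^ (-(2 / α) - 1) = r ^ (-(2 / α) - 1 - 1) * r := by
    rw [← Real.rpow_add_one hr.ne', sub_add_cancel]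
  have hpow' : r ^ (-(2 / α)) = r ^ (-(2 / α) - 1 - 1) * r * r := by
    rw [← hpow, ← Real.rpow_add_one hr.ne', sub_add_cancel]
  rw [deriv_deriv_emdenProfile hw hr, deriv_emdenProfile (hw.differentiable two_ne_zero) hr,
    abs_emdenProfile_rpow hα hβ₀ hr, emdenProfile, emdenNonlinearity, hpow', hpow]
  generalize β ^ (1 / α) = κ
  rw [hβ]
  field_simp
  ring

theorem contDiffOn_emdenProfile (hw : ContDiff ℝ 2 w) :
    ContDiffOn ℝ 2 (emdenProfile α β w) (Ioi 0) :=
  contDiffOn_const.mul <|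
    (contDiffOn_id.rpow_const_of_ne fun _ hr ↦ (ne_of_gt hr)).mul <|
      hw.comp_contDiffOn (contDiffOn_id.log fun _ hr ↦ (ne_of_gt hr))

theorem isRadialSolution_emdenProfile_iff (hα : 0 < α) (hβ₀ : 0 < β)
    (hβ : β = 2 / α * (n - 2 - 2 / α)) (hw : ContDiff ℝ 2 w) :
    IsRadialSolution n α (emdenProfile α β w) ↔
      IsNewtonTrajectory (4 / α - (n - 2)) (emdenNonlinearity α β) w (deriv w) := by
  have hw₂ : Differentiable ℝ (deriv w) := hw.differentiable_deriv_two
  refine ⟨fun h ↦ ⟨fun t ↦ (hw.differentiable two_ne_zero t).hasDerivAt, fun t ↦ ?_⟩,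
    fun h ↦ ⟨contDiffOn_emdenProfile hw, fun r hr ↦ ?_⟩⟩
  · have heq := h.equation _ (Real.exp_pos t)
    rw [radial_equation_emdenProfile hα hβ₀ hβ hw (Real.exp_pos t), Real.log_exp] at heq
    exact (hw₂ t).hasDerivAt.congr_deriv
      (sub_eq_zero.1 ((mul_eq_zero.1 heq).resolve_left (by positivity)))
  · rw [radial_equation_emdenProfile hα hβ₀ hβ hw hr, (h.hasDerivAt_velocity _).deriv, sub_self,
      mul_zero]

theorem exists_eqOn_emdenProfile (hβ : 0 < β) (α : ℝ) (hu : ContDiffOn ℝ 2 u (Ioi 0)) :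
    ∃ w, ContDiff ℝ 2 w ∧ EqOn u (emdenProfile α β w) (Ioi 0) := by
  refine ⟨fun t ↦ (β ^ (1 / α))⁻¹ * (Real.exp (2 / α * t) * u (Real.exp t)), ?_, fun r hr ↦ ?_⟩
  · exact contDiff_const.mul <| (contDiff_const.mul contDiff_id).exp.mul <|
      hu.comp_contDiff Real.contDiff_exp Real.exp_pos
  · have hscale : r ^ (-(2 / α)) * Real.exp (2 / α * Real.log r) = 1 := by
      rw [Real.rpow_def_of_pos hr, ← Real.exp_add]
      simp [mul_comm]
    have hamplitude : β ^ (1 / α) ≠ 0 := (Real.rpow_pos_of_pos hβ _).ne'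
    rw [emdenProfile, Real.exp_log hr, mul_left_comm, mul_inv_cancel_left₀ hamplitude, ← mul_assoc,
      hscale, one_mul]

theorem hasEmdenData_emdenProfile_iff (hβ : 0 < β) (hw : Differentiable ℝ w) (hr : 0 < r) :
    HasEmdenData α β (emdenProfile α β w) r a b ↔
      w (Real.log r) = a ∧ deriv w (Real.log r) = 2 / α * a - b := by
  have hvalue : β ^ (1 / α) * r ^ (-(2 / α)) ≠ 0 := by positivity
  have hslope : β ^ (1 / α) * r ^ (-(2 / α) - 1) ≠ 0 := by positivity
  have hdata : HasEmdenData α β (emdenProfile α β w) r a b ↔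
      w (Real.log r) = a ∧ deriv w (Real.log r) - 2 / α * w (Real.log r) = -b := by
    rw [HasEmdenData, deriv_emdenProfile hw hr, emdenProfile, ← mul_assoc, ← mul_assoc,
      mul_assoc a, mul_assoc (-b), mul_comm a, mul_comm (-b), mul_right_inj' hvalue,
      mul_right_inj' hslope]
  rw [hdata]
  exact and_congr_right fun hw₀ ↦ by rw [hw₀, sub_eq_iff_eq_add, neg_add_eq_sub]

theorem emdenProfile_neg_iff (hβ : 0 < β) (hr : 0 < r) :
    emdenProfile α β w r < 0 ↔ w (Real.log r) < 0 := by
  have hfactor : 0 < β ^ (1 / α) * r ^ (-(2 / α)) := by positivity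
  rw [emdenProfile, ← mul_assoc, ← smul_eq_mul, smul_neg_iff_of_pos_left hfactor]

theorem emdenProfile_eq_zero_iff (hβ : 0 < β) (hr : 0 < r) :
    emdenProfile α β w r = 0 ↔ w (Real.log r) = 0 := by
  have hfactor : β ^ (1 / α) * r ^ (-(2 / α)) ≠ 0 := by positivity
  rw [emdenProfile, ← mul_assoc, mul_eq_zero_iff_left hfactor]

theorem tendsto_rpow_mul_emdenProfile {L : ℝ} (hw : Tendsto w atBot (𝓝 L)) :
    Tendsto (fun r ↦ r ^ (2 / α) * emdenProfile α β w r) (𝓝[>] 0) (𝓝 (L * β ^ (1 / α))) := by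
  refine ((hw.comp Real.tendsto_log_nhdsGT_zero).mul_const _).congr' ?_
  filter_upwards [self_mem_nhdsWithin] with r hr
  have hscale : r ^ (2 / α) * r ^ (-(2 / α)) = 1 := by rw [← Real.rpow_add hr]; simp
  rw [emdenProfile, Function.comp_apply]
  linear_combination (-(β ^ (1 / α) * w (Real.log r))) * hscale

theorem abs_emdenProfile_le {C δ : ℝ} (hβ : 0 ≤ β)
    (hw : ∀ t, 0 < t → |w t| ≤ C * Real.exp (δ * t)) (hr : 1 < r) :
    |emdenProfile α β w r| ≤ β ^ (1 / α) * C * r ^ (δ - 2 / α) := by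
  have hr₀ : 0 < r := zero_lt_one.trans hr
  have hbound : |w (Real.log r)| ≤ C * r ^ δ := by
    simpa only [Real.rpow_def_of_pos hr₀, mul_comm δ] using hw _ (Real.log_pos hr)
  calc |emdenProfile α β w r| = β ^ (1 / α) * (r ^ (-(2 / α)) * |w (Real.log r)|) := by
        rw [emdenProfile, abs_mul, abs_mul, abs_of_nonneg (Real.rpow_nonneg hβ _),
          abs_of_pos (Real.rpow_pos_of_pos hr₀ _)]
    _ ≤ β ^ (1 / α) * (r ^ (-(2 / α)) * (C * r ^ δ)) := by gcongr
    _ = β ^ (1 / α) * C * r ^ (δ - 2 / α) := by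
        rw [sub_eq_add_neg, Real.rpow_add hr₀]; ring

end EmdenTransform

section ZeroEnergy

open Set Topology

variable {α β δ t₀ : ℝ} {w y : ℝ → ℝ}

theorem energy_emdenPotential_eq_zero {n a b : ℝ} (hα : 0 < α) (ha : 0 < a)
    (hβ : β = 2 / α * (n - 2 - 2 / α))
    (h : 1 / 2 * (b - 2 * a / α) ^ 2 =
      a ^ 2 * (((n - 2) * α - 2) / (α ^ 2 * (α + 2))) * (α + 2 - 2 * a ^ α)) :
    energy (emdenPotential α β) (a, 2 / α * a - b) = 0 := by
  have hkinetic : (2 / α * a - b) ^ 2 / 2 = 1 / 2 * (b - 2 * a / α) ^ 2 := by ring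
  have : α + 2 ≠ 0 := by positivity
  simp only [energy]
  rw [emdenPotential_eq_sq_mul hα, abs_of_pos ha, hβ, hkinetic, h]
  field_simp
  ring

theorem tendsto_atBot_one_of_energy_eq_zero
    (h : IsNewtonTrajectory δ (emdenNonlinearity α β) w y) (hα : 0 < α) (hβ : 0 < β) (hδ : 0 < δ)
    (hE : energy (emdenPotential α β) (w t₀, y t₀) = 0) (hw : 0 < w t₀) (hy : y t₀ ≠ 0) :
    Tendsto w atBot (𝓝 1) := by
  obtain ⟨K, hK⟩ := exists_half_sq_le_emdenPotential_add hα hβ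
  exact h.tendsto_atBot_of_energy_eq_zero (hasDerivAt_emdenPotential hα β)
    (contDiff_emdenNonlinearity hα β).continuous hK hδ (emdenPotential_zero hα)
    (fun _ hx ↦ eq_one_of_emdenNonlinearity_eq_zero hα.ne' hβ.ne' hx) hE hw hy

theorem exists_gt_eq_zero_of_energy_eq_zero
    (h : IsNewtonTrajectory δ (emdenNonlinearity α β) w y) (hα : 0 < α) (hβ : 0 < β) (hδ : 0 < δ)
    (hE : energy (emdenPotential α β) (w t₀, y t₀) = 0) (hy : y t₀ ≠ 0) (S : ℝ) :
    ∃ t > S, w t = 0 ∧ y t ≠ 0 := by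
  have hV := hasDerivAt_emdenPotential hα β
  have hpos : ∀ t > t₀, 0 < energy (emdenPotential α β) (w t, y t) := fun t ht ↦
    hE ▸ h.energy_lt_energy hV hδ ht (left_mem_Icc.2 ht.le) hy
  have hS : t₀ < max S t₀ + 1 := (le_max_right S t₀).trans_lt (lt_add_one _)
  obtain ⟨t, ht, hwt⟩ := h.exists_zero_of_energy_pos hV
    (contDiff_emdenNonlinearity hα β).continuous hδ.le
    (fun _ ↦ mul_emdenNonlinearity_pos_of_emdenPotential_pos hα hβ) (lt_add_one (δ ^ 2 / 4))
    (eventually_mul_le_emdenNonlinearity_atTop hα hβ _)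
    (eventually_emdenNonlinearity_le_mul_atBot hα hβ _) (hpos _ hS)
  refine ⟨t, ((le_max_left S t₀).trans_lt (lt_add_one _)).trans_le ht, hwt, fun hyt ↦ ?_⟩
  simpa [energy, hwt, hyt, emdenPotential_zero hα] using hpos t (hS.trans_le ht)

theorem exists_oscillating_isNewtonTrajectory_of_energy_eq_zero {x₀ y₀ : ℝ} (hα : 0 < α)
    (hβ : 0 < β) (hδ : 0 < δ) (t₀ : ℝ) (hE : energy (emdenPotential α β) (x₀, y₀) = 0)
    (hx₀ : 0 < x₀) (hy₀ : y₀ ≠ 0) :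
    ∃ w, ContDiff ℝ 2 w ∧ IsNewtonTrajectory δ (emdenNonlinearity α β) w (deriv w) ∧
      (w t₀ = x₀ ∧ deriv w t₀ = y₀) ∧ (∃ t, w t < 0) ∧ Tendsto w atBot (𝓝 1) ∧
      (∃ C, ∀ t, 0 < t → |w t| ≤ C * Real.exp (δ * t)) ∧ ∀ S, ∃ t > S, w t = 0 := by
  have hV := hasDerivAt_emdenPotential hα β
  have hg := contDiff_emdenNonlinearity hα β
  obtain ⟨K, hK⟩ := exists_half_sq_le_emdenPotential_add hα hβ
  obtain ⟨w, y, h, rfl, rfl⟩ := exists_isNewtonTrajectory hg hV hK δ t₀ x₀ y₀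
  obtain rfl : deriv w = y := funext fun t ↦ (h.hasDerivAt t).deriv
  have hzero := exists_gt_eq_zero_of_energy_eq_zero h hα hβ hδ hE hy₀
  obtain ⟨t, -, hwt, hyt⟩ := hzero 0
  obtain ⟨C, hC⟩ := h.exists_abs_le_mul_exp hV hK
  exact ⟨w, h.contDiff hg.continuous, h, ⟨rfl, rfl⟩, h.exists_neg_of_apply_eq_zero hwt hyt,
    tendsto_atBot_one_of_energy_eq_zero h hα hβ hδ hE hx₀ hy₀,
    ⟨C, fun t ht ↦ by simpa only [abs_of_pos hδ, abs_of_pos ht] using hC t⟩,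
    fun S ↦ (hzero S).imp fun t ht ↦ ⟨ht.1, ht.2.1⟩⟩

theorem IsRadialSolution.emdenData_unique {n a b r₀ a' b' r₀' : ℝ} {u : ℝ → ℝ}
    (hu : IsRadialSolution n α u) (hα : 0 < α) (hδ : n - 2 < 4 / α) (hβ₀ : 0 < β)
    (hβ : β = 2 / α * (n - 2 - 2 / α)) (hr₀ : 0 < r₀) (hr₀' : 0 < r₀')
    (hE : energy (emdenPotential α β) (a, 2 / α * a - b) = 0)
    (hE' : energy (emdenPotential α β) (a', 2 / α * a' - b') = 0) (hb : 2 / α * a - b ≠ 0)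
    (hdata : HasEmdenData α β u r₀ a b) (hdata' : HasEmdenData α β u r₀' a' b') :
    r₀ = r₀' ∧ a = a' := by
  obtain ⟨w, hw, huw⟩ := exists_eqOn_emdenProfile hβ₀ α hu.contDiffOn
  have h := (isRadialSolution_emdenProfile_iff hα hβ₀ hβ hw).1 (hu.congr huw)
  have hw₁ : Differentiable ℝ w := hw.differentiable two_ne_zero
  obtain ⟨hw₀, hy₀⟩ := (hasEmdenData_emdenProfile_iff hβ₀ hw₁ hr₀).1 (hdata.congr huw hr₀)
  obtain ⟨hw₀', hy₀'⟩ := (hasEmdenData_emdenProfile_iff hβ₀ hw₁ hr₀').1 (hdata'.congr huw hr₀')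
  have hlog : Real.log r₀ = Real.log r₀' :=
    h.eq_of_energy_eq (hasDerivAt_emdenPotential hα β) (sub_pos.2 hδ)
      (by rw [hw₀, hy₀, hw₀', hy₀', hE, hE']) (hy₀ ▸ hb)
  exact ⟨Real.log_injOn_pos hr₀ hr₀' hlog, by rw [← hw₀, hlog, hw₀']⟩

end ZeroEnergy

theorem stmt_16_general {n α β : ℝ} (hα : 0 < α) (hlow : 2 / α < n - 2) (hhigh : n - 2 < 4 / α)
    (hβ : β = 2 / α * (n - 2 - 2 / α)) :
    (∀ r₀ a b : ℝ, 0 < r₀ → 0 < a → b ≠ 2 * a / α →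
      1 / 2 * (b - 2 * a / α) ^ 2 =
        a ^ 2 * (((n - 2) * α - 2) / (α ^ 2 * (α + 2))) * (α + 2 - 2 * a ^ α) →
      ∃ u : ℝ → ℝ, IsRadialSolution n α u ∧ HasEmdenData α β u r₀ a b ∧
        (∃ r : ℝ, 0 < r ∧ 0 < u r) ∧ (∃ r : ℝ, 0 < r ∧ u r < 0) ∧
        Tendsto (fun r : ℝ ↦ r ^ (2 / α) * u r) (nhdsWithin 0 (Set.Ioi 0)) (nhds (β ^ (1 / α))) ∧
        (∃ C : ℝ, ∀ r : ℝ, 1 < r → |u r| ≤ C * r ^ (-(n - 2 - 2 / α))) ∧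
        ∀ R : ℝ, 0 < R → ∃ r : ℝ, R < r ∧ u r = 0) ∧
    ∀ r₀ a b r₀' a' b' : ℝ, ∀ u : ℝ → ℝ, 0 < r₀ → 0 < a → b ≠ 2 * a / α →
      1 / 2 * (b - 2 * a / α) ^ 2 =
        a ^ 2 * (((n - 2) * α - 2) / (α ^ 2 * (α + 2))) * (α + 2 - 2 * a ^ α) →
      0 < r₀' → 0 < a' →
      1 / 2 * (b' - 2 * a' / α) ^ 2 =
        a' ^ 2 * (((n - 2) * α - 2) / (α ^ 2 * (α + 2))) * (α + 2 - 2 * a' ^ α) →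
      IsRadialSolution n α u → HasEmdenData α β u r₀ a b → HasEmdenData α β u r₀' a' b' →
      r₀ = r₀' ∧ a = a' := by
  have hβ₀ : 0 < β := hβ ▸ mul_pos (by positivity) (sub_pos.2 hlow)
  have hvelocity : ∀ {a b : ℝ}, b ≠ 2 * a / α → 2 / α * a - b ≠ 0 := fun hb ↦
    sub_ne_zero.2 (by rwa [div_mul_eq_mul_div, ne_comm])
  refine ⟨fun r₀ a b hr₀ ha hb hab ↦ ?_, fun r₀ a b r₀' a' b' u hr₀ ha hb hab hr₀' ha' hab' hu ↦
    hu.emdenData_unique hα hhigh hβ₀ hβ hr₀ hr₀' (energy_emdenPotential_eq_zero hα ha hβ hab)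
      (energy_emdenPotential_eq_zero hα ha' hβ hab') (hvelocity hb)⟩
  obtain ⟨w, hw, h, hinit, ⟨s, hs⟩, hlim, ⟨C, hC⟩, hzero⟩ :=
    exists_oscillating_isNewtonTrajectory_of_energy_eq_zero hα hβ₀ (sub_pos.2 hhigh) (Real.log r₀)
      (energy_emdenPotential_eq_zero hα ha hβ hab) ha (hvelocity hb)
  have hdata : HasEmdenData α β (emdenProfile α β w) r₀ a b :=
    (hasEmdenData_emdenProfile_iff hβ₀ (hw.differentiable two_ne_zero) hr₀).2 hinit
  have hexponent : 4 / α - (n - 2) - 2 / α = -(n - 2 - 2 / α) := by ring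
  refine ⟨emdenProfile α β w, (isRadialSolution_emdenProfile_iff hα hβ₀ hβ hw).2 h, hdata,
    ⟨r₀, hr₀, hdata.1 ▸ by positivity⟩, ⟨Real.exp s, Real.exp_pos s, ?_⟩,
    by simpa only [one_mul] using tendsto_rpow_mul_emdenProfile hlim,
    ⟨β ^ (1 / α) * C, fun r hr ↦ hexponent ▸ abs_emdenProfile_le hβ₀.le hC hr⟩, fun R hR ↦ ?_⟩
  · rwa [emdenProfile_neg_iff hβ₀ (Real.exp_pos s), Real.log_exp]
  · obtain ⟨t, ht, hwt⟩ := hzero (Real.log R)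
    refine ⟨Real.exp t, (Real.log_lt_iff_lt_exp hR).1 ht, ?_⟩
    rwa [emdenProfile_eq_zero_iff hβ₀ (Real.exp_pos t), Real.log_exp]

theorem stmt_16 (N : ℕ) (hN : 3 ≤ N) (α β : ℝ)
    (hα1 : 2 / ((N : ℝ) - 2) < α) (hα2 : α < 4 / ((N : ℝ) - 2))
    (hβ : β = 2 / α * ((N : ℝ) - 2 - 2 / α)) :
    -- existence of the two-parameter family
    (∀ r₀ a b : ℝ, 0 < r₀ → 0 < a → a < ((α + 2) / 2) ^ (1 / α) →
      2 * a / α < b →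
      1 / 2 * (b - 2 * a / α) ^ 2 =
        a ^ 2 * ((((N : ℝ) - 2) * α - 2) / (α ^ 2 * (α + 2))) * (α + 2 - 2 * a ^ α) →
      ∃ u : ℝ → ℝ,
        -- u is a C² solution on all of (0,∞)
        ContDiffOn ℝ 2 u (Set.Ioi 0) ∧
        (∀ r : ℝ, 0 < r →
          deriv (deriv u) r + (((N : ℝ) - 1) / r) * deriv u r + |u r| ^ α * u r = 0) ∧
        -- with the prescribed data at r₀
        u r₀ = a * β ^ (1 / α) * r₀ ^ (-(2 / α)) ∧
        deriv u r₀ = -b * β ^ (1 / α) * r₀ ^ (-(2 / α) - 1) ∧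
        -- sign-changing
        (∃ r : ℝ, 0 < r ∧ 0 < u r) ∧ (∃ r : ℝ, 0 < r ∧ u r < 0) ∧
        -- singular at 0
        (∃ ε : ℝ, (ε = 1 ∨ ε = -1) ∧
          Tendsto (fun r : ℝ => r ^ (2 / α) * u r)
            (nhdsWithin 0 (Set.Ioi 0)) (nhds (ε * β ^ (1 / α)))) ∧
        -- decay at infinity
        (∃ C : ℝ, ∀ r : ℝ, 1 < r → |u r| ≤ C * r ^ (-((N : ℝ) - 2 - 2 / α))) ∧
        -- oscillates indefinitely
        (∀ R : ℝ, 0 < R → ∃ r : ℝ, R < r ∧ u r = 0)) ∧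
    -- distinct pairs (r₀, a) yield distinct solutions
    (∀ r₀ a b r₀' a' b' : ℝ, ∀ u : ℝ → ℝ,
      0 < r₀ → 0 < a → a < ((α + 2) / 2) ^ (1 / α) → 2 * a / α < b →
      1 / 2 * (b - 2 * a / α) ^ 2 =
        a ^ 2 * ((((N : ℝ) - 2) * α - 2) / (α ^ 2 * (α + 2))) * (α + 2 - 2 * a ^ α) →
      0 < r₀' → 0 < a' → a' < ((α + 2) / 2) ^ (1 / α) → 2 * a' / α < b' →
      1 / 2 * (b' - 2 * a' / α) ^ 2 =
        a' ^ 2 * ((((N : ℝ) - 2) * α - 2) / (α ^ 2 * (α + 2))) * (α + 2 - 2 * a' ^ α) →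
      ContDiffOn ℝ 2 u (Set.Ioi 0) →
      (∀ r : ℝ, 0 < r →
        deriv (deriv u) r + (((N : ℝ) - 1) / r) * deriv u r + |u r| ^ α * u r = 0) →
      u r₀ = a * β ^ (1 / α) * r₀ ^ (-(2 / α)) →
      deriv u r₀ = -b * β ^ (1 / α) * r₀ ^ (-(2 / α) - 1) →
      u r₀' = a' * β ^ (1 / α) * r₀' ^ (-(2 / α)) →
      deriv u r₀' = -b' * β ^ (1 / α) * r₀' ^ (-(2 / α) - 1) →
      r₀ = r₀' ∧ a = a') := by
  have hN₂ : (0 : ℝ) < N - 2 := sub_pos.2 (by exact_mod_cast hN)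
  have hα : 0 < α := (div_pos two_pos hN₂).trans hα1
  obtain ⟨hexists, hunique⟩ := stmt_16_general hα ((div_lt_comm₀ hN₂ hα).1 hα1)
    ((lt_div_comm₀ hα hN₂).1 hα2) hβ
  constructor
  · intro r₀ a b hr₀ ha _ hb hab
    obtain ⟨u, hu, hdata, hpos, hneg, hsingular, hdecay, hzeros⟩ :=
      hexists r₀ a b hr₀ ha hb.ne' hab
    exact ⟨u, hu.contDiffOn, hu.equation, hdata.1, hdata.2, hpos, hneg,
      ⟨1, .inl rfl, by rwa [one_mul]⟩, hdecay, hzeros⟩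
  · intro r₀ a b r₀' a' b' u hr₀ ha _ hb hab hr₀' ha' _ _ hab' hu hode hur₀ hdur₀ hur₀' hdur₀'
    exact hunique r₀ a b r₀' a' b' u hr₀ ha hb.ne' hab hr₀' ha' hab' ⟨hu, hode⟩
      ⟨hur₀, hdur₀⟩ ⟨hur₀', hdur₀'⟩
end

section
/- Let a ∈ ℝ and let u ∈ C²((0,∞)) be a solution of u'' + ((N−1)/r + ar/2)u' + (a/α)u + |u|^α u = 0 on (0,∞). If r^{2/α} u(r) → β^{1/α} as r→0, then there exists a constant C such that |r^{2/α} u(r) − β^{1/α}| ≤ C r^ρ for all 0 < r ≤ 1. -/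
open Filter

/-!
In the variable `s = -log r` the function `W s = r ^ (2 / α) * u r` solves the autonomous equation
`W'' + (ρ + l) W' + |W| ^ α W - β W = 0`, up to a damping perturbation of size `exp (-2 s)`. The
linearization at the equilibrium `w = β ^ (1 / α)` has the eigenvalues `-ρ` and `-l`, where
`ρ + l = 4 / α - (N - 2)` and `ρ * l = α * β`; the bounds on `α` make them real and distinct with
`0 < ρ < l`. The squared eigencoordinates of `(W - w, W')` add up to an energy `E` satisfying
`E' ≤ (-2 ρ + O(exp (-2 s) + √E)) E`. As `W → w`, this first gives some exponential decay of `E`;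
the perturbation is then integrable, so `E = O(exp (-2 ρ s))`, that is, `W - w = O(r ^ ρ)`.
-/

open Asymptotics Real Set Topology

section Asymptotics

theorem isBigO_exp_neg_mul_of_le {a b : ℝ} (hab : a ≤ b) :
    (fun s ↦ exp (-b * s)) =O[atTop] fun s ↦ exp (-a * s) := by
  refine .of_bound' ?_
  filter_upwards [eventually_ge_atTop 0] with s hs
  simp only [norm_eq_abs, abs_exp, exp_le_exp]
  nlinarith

theorem isBigO_sqrt_exp_neg_mul {f : ℝ → ℝ} {a : ℝ} (h : f =O[atTop] fun s ↦ exp (-a * s)) :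
    (fun s ↦ √(f s)) =O[atTop] fun s ↦ exp (-(a / 2) * s) := by
  refine (h.sqrt (.of_forall fun _ ↦ (exp_pos _).le)).congr_right fun s ↦ ?_
  rw [← exp_half]
  ring_nf

theorem tendsto_exp_neg_mul_atTop {c : ℝ} (hc : 0 < c) :
    Tendsto (fun s ↦ exp (-c * s)) atTop (𝓝 0) :=
  tendsto_exp_atBot.comp (tendsto_id.const_mul_atTop_of_neg (neg_neg_of_pos hc))

theorem isBigO_principal_Ici_of_isBigO_atTop {E F : Type*} [NormedAddCommGroup E]
    [NormedAddCommGroup F] {f : ℝ → E} {g : ℝ → F} {a : ℝ} (hf : Continuous f)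
    (hg : Continuous g) (hg0 : ∀ s, g s ≠ 0) (h : f =O[atTop] g) : f =O[𝓟 (Ici a)] g := by
  obtain ⟨c, hc⟩ := h.isBigOWith
  obtain ⟨b, hb⟩ := eventually_atTop.1 hc.bound
  have h_tail : f =O[𝓟 (Ici b)] g := isBigO_principal.2 ⟨c, hb⟩
  have h_compact : f =O[𝓟 (Icc a b)] g :=
    (hf.continuousOn.isBigO_principal isCompact_Icc (c := (1 : ℝ)) (by simp)).trans
      (hg.continuousOn.isBigO_rev_principal isCompact_Icc (fun s _ ↦ hg0 s) 1)
  refine (h_compact.sup h_tail).mono ?_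
  rw [sup_principal, principal_mono]
  exact Ici_subset_Icc_union_Ici

theorem isBigO_sub_sub_smul_deriv_of_contDiffAt_two {E : Type*} [NormedAddCommGroup E]
    [NormedSpace ℝ E] {f : ℝ → E} {x₀ : ℝ} (hf : ContDiffAt ℝ 2 f x₀) :
    (fun x ↦ f x - f x₀ - (x - x₀) • deriv f x₀) =O[𝓝 x₀] fun x ↦ (x - x₀) ^ 2 := by
  obtain ⟨t, ht, hft⟩ := hf.contDiffOn (m := (2 : ℕ)) le_rfl (by simp)
  obtain ⟨r, hr, hrt⟩ := Metric.mem_nhds_iff.1 ht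
  have h_ball : Metric.ball x₀ r ∈ 𝓝 x₀ := Metric.ball_mem_nhds x₀ hr
  have h_taylor := taylor_isLittleO (convex_ball x₀ r) (Metric.mem_ball_self hr) (hft.mono hrt)
  rw [nhdsWithin_eq_nhds.2 h_ball] at h_taylor
  have h_quadratic : (fun x ↦ (2⁻¹ * (x - x₀) ^ 2) •
      iteratedDerivWithin 2 f (Metric.ball x₀ r) x₀) =O[𝓝 x₀] fun x ↦ (x - x₀) ^ 2 :=
    (((isBigO_refl _ _).const_mul_left 2⁻¹).smul
      (isBigO_refl (fun _ ↦ iteratedDerivWithin 2 f (Metric.ball x₀ r) x₀) _)).trans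
      (.of_bound ‖iteratedDerivWithin 2 f (Metric.ball x₀ r) x₀‖ (.of_forall fun x ↦ by
        rw [norm_smul, mul_comm]))
  refine (h_taylor.isBigO.add h_quadratic).congr_left fun x ↦ ?_
  have h_poly : taylorWithinEval f 2 (Metric.ball x₀ r) x₀ x = f x₀ + (x - x₀) • deriv f x₀
      + (2⁻¹ * (x - x₀) ^ 2) • iteratedDerivWithin 2 f (Metric.ball x₀ r) x₀ := by
    simp [taylorWithinEval_succ, derivWithin_of_mem_nhds h_ball, iteratedDerivWithin_one,
      one_add_one_eq_two]
  rw [h_poly]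
  abel

end Asymptotics

section Gronwall

variable {E g : ℝ → ℝ} {κ c : ℝ}

theorem isBigO_exp_neg_of_deriv_le (hc : 0 < c) (hE : ∀ᶠ s in atTop, DifferentiableAt ℝ E s)
    (hE₀ : ∀ᶠ s in atTop, 0 ≤ E s) (hE' : ∀ᶠ s in atTop, deriv E s ≤ (g s - κ) * E s)
    (hg : g =O[atTop] fun s ↦ exp (-c * s)) : E =O[atTop] fun s ↦ exp (-κ * s) := by
  obtain ⟨A, hA, hgA⟩ := hg.exists_pos
  obtain ⟨s₀, hs₀⟩ := eventually_atTop.1 (hE.and (hE₀.and (hE'.and hgA.bound)))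
  choose hE hE₀ hE' hgA using hs₀
  let φ : ℝ → ℝ := fun s ↦ κ * s + A / c * exp (-c * s)
  have hφ (s : ℝ) : HasDerivAt φ (κ - A * exp (-c * s)) s := by
    have h := ((hasDerivAt_id s).const_mul κ).add
      (((hasDerivAt_id s).const_mul (-c)).exp.const_mul (A / c))
    refine h.congr_deriv ?_
    simp only [id_eq]
    field
  have hEφ (s : ℝ) (hs : s₀ ≤ s) : HasDerivAt (fun s ↦ E s * exp (φ s))
      ((deriv E s - (A * exp (-c * s) - κ) * E s) * exp (φ s)) s :=
    ((hE s hs).hasDerivAt.mul (hφ s).exp).congr_deriv (by ring)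
  have h_anti : AntitoneOn (fun s ↦ E s * exp (φ s)) (Ici s₀) := by
    refine antitoneOn_of_deriv_nonpos (convex_Ici s₀)
      (fun s hs ↦ (hEφ s hs).continuousAt.continuousWithinAt)
      (fun s hs ↦ (hEφ s (interior_subset hs)).differentiableAt.differentiableWithinAt)
      fun s hs ↦ ?_
    have hs : s₀ ≤ s := interior_subset hs
    have hgs : g s ≤ A * exp (-c * s) := by
      simpa only [norm_eq_abs, abs_exp] using (le_abs_self _).trans (hgA s hs)
    rw [(hEφ s hs).deriv]
    refine mul_nonpos_of_nonpos_of_nonneg (sub_nonpos.2 ((hE' s hs).trans ?_)) (exp_pos _).le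
    exact mul_le_mul_of_nonneg_right (by linarith) (hE₀ s hs)
  refine .of_bound (E s₀ * exp (φ s₀)) ?_
  filter_upwards [eventually_ge_atTop s₀] with s hs
  rw [norm_eq_abs, norm_eq_abs, abs_exp, abs_of_nonneg (hE₀ s hs), neg_mul, exp_neg,
    ← div_eq_mul_inv, le_div_iff₀ (exp_pos _)]
  calc E s * exp (κ * s) ≤ E s * exp (φ s) := by
        have := hE₀ s hs
        gcongr
        exact le_add_of_nonneg_right (by positivity)
    _ ≤ E s₀ * exp (φ s₀) := h_anti self_mem_Ici hs hs

theorem isBigO_exp_neg_of_deriv_le_of_isBigO_sqrt (hκ : 0 < κ) (hc : 0 < c)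
    (hE : ∀ᶠ s in atTop, DifferentiableAt ℝ E s) (hE₀ : ∀ᶠ s in atTop, 0 ≤ E s)
    (hE' : ∀ᶠ s in atTop, deriv E s ≤ (g s - κ) * E s) (hg₀ : Tendsto g atTop (𝓝 0))
    (hg : g =O[atTop] fun s ↦ exp (-c * s) + √(E s)) : E =O[atTop] fun s ↦ exp (-κ * s) := by
  have h_half : E =O[atTop] fun s ↦ exp (-(κ / 2) * s) := by
    refine isBigO_exp_neg_of_deriv_le hc hE hE₀ ?_ (isBigO_zero _ _)
    filter_upwards [hE', hE₀, hg₀.eventually_le_const (half_pos hκ)] with s hE's hE₀s hgs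
    exact hE's.trans (mul_le_mul_of_nonneg_right (by linarith) hE₀s)
  refine isBigO_exp_neg_of_deriv_le (c := min c (κ / 2 / 2)) (by positivity) hE hE₀ hE'
    (hg.trans ?_)
  exact (isBigO_exp_neg_mul_of_le (min_le_left _ _)).add
    ((isBigO_sqrt_exp_neg_mul h_half).trans (isBigO_exp_neg_mul_of_le (min_le_right _ _)))

end Gronwall

section SecondOrder

variable {ρ l c : ℝ}

/-- The energy of the state `(x, x') = (x, y)` of `x'' + (ρ + l) x' + ρ l x = 0`: the sum of the
squares of `y + ρ x` and `y + l x`, which decay exactly like `exp (-l s)` and `exp (-ρ s)` along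
solutions. It serves as a Lyapunov function for perturbations of this equation. -/
def modalEnergy (ρ l x y : ℝ) : ℝ := (y + ρ * x) ^ 2 + (y + l * x) ^ 2

theorem modalEnergy_nonneg (ρ l x y : ℝ) : 0 ≤ modalEnergy ρ l x y := by
  unfold modalEnergy
  positivity

theorem abs_add_mul_le_sqrt_modalEnergy (ρ l x y : ℝ) : |y + ρ * x| ≤ √(modalEnergy ρ l x y) :=
  abs_le_sqrt (le_add_of_nonneg_right (sq_nonneg _))

theorem modalEnergy_comm (ρ l x y : ℝ) : modalEnergy ρ l x y = modalEnergy l ρ x y :=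
  add_comm _ _

theorem abs_sub_mul_abs_add_abs_le_sqrt_modalEnergy (ρ l x y : ℝ) :
    |l - ρ| * (|x| + |y|) ≤ (2 + |l| + |ρ|) * √(modalEnergy ρ l x y) := by
  have hX := abs_add_mul_le_sqrt_modalEnergy ρ l x y
  have hY := modalEnergy_comm ρ l x y ▸ abs_add_mul_le_sqrt_modalEnergy l ρ x y
  calc |l - ρ| * (|x| + |y|)
      = |(y + l * x) - (y + ρ * x)| + |l * (y + ρ * x) - ρ * (y + l * x)| := by
        rw [mul_add, ← abs_mul, ← abs_mul]
        ring_nf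
    _ ≤ (|y + l * x| + |y + ρ * x|) + (|l| * |y + ρ * x| + |ρ| * |y + l * x|) := by
        rw [← abs_mul, ← abs_mul]
        exact add_le_add (abs_sub _ _) (abs_sub _ _)
    _ ≤ (√(modalEnergy ρ l x y) + √(modalEnergy ρ l x y))
        + (|l| * √(modalEnergy ρ l x y) + |ρ| * √(modalEnergy ρ l x y)) := by gcongr
    _ = (2 + |l| + |ρ|) * √(modalEnergy ρ l x y) := by ring

theorem hasDerivAt_modalEnergy {v p : ℝ → ℝ} {s h : ℝ} (hv : HasDerivAt v (p s) s)
    (hp : HasDerivAt p (h - (ρ + l) * p s - ρ * l * v s) s) :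
    HasDerivAt (fun s ↦ modalEnergy ρ l (v s) (p s))
      (2 * (((p s + ρ * v s) + (p s + l * v s)) * h
        - l * (p s + ρ * v s) ^ 2 - ρ * (p s + l * v s) ^ 2)) s := by
  have hE := ((hp.add (hv.const_mul ρ)).pow 2).add ((hp.add (hv.const_mul l)).pow 2)
  refine hE.congr_deriv ?_
  simp only [Pi.add_apply]
  ring

theorem deriv_modalEnergy_le (hρl : ρ ≤ l) {v p : ℝ → ℝ} {s h : ℝ}
    (hv : HasDerivAt v (p s) s) (hp : HasDerivAt p (h - (ρ + l) * p s - ρ * l * v s) s) :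
    deriv (fun s ↦ modalEnergy ρ l (v s) (p s)) s
      ≤ 4 * √(modalEnergy ρ l (v s) (p s)) * |h| - 2 * ρ * modalEnergy ρ l (v s) (p s) := by
  rw [(hasDerivAt_modalEnergy hv hp).deriv]
  have hX := abs_add_mul_le_sqrt_modalEnergy ρ l (v s) (p s)
  have hY := modalEnergy_comm ρ l (v s) (p s) ▸ abs_add_mul_le_sqrt_modalEnergy l ρ (v s) (p s)
  have h_force : ((p s + ρ * v s) + (p s + l * v s)) * h
      ≤ 2 * √(modalEnergy ρ l (v s) (p s)) * |h| := by
    refine (le_abs_self _).trans ?_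
    rw [abs_mul]
    gcongr
    linarith [abs_add_le (p s + ρ * v s) (p s + l * v s)]
  have h_damp : ρ * (p s + ρ * v s) ^ 2 ≤ l * (p s + ρ * v s) ^ 2 := by gcongr
  unfold modalEnergy at *
  linarith

theorem deriv_modalEnergy_le_mul (hρl : ρ ≤ l) {v p : ℝ → ℝ} {s h B : ℝ}
    (hv : HasDerivAt v (p s) s) (hp : HasDerivAt p (h - (ρ + l) * p s - ρ * l * v s) s)
    (hh : |h| ≤ B * √(modalEnergy ρ l (v s) (p s))) :
    deriv (fun s ↦ modalEnergy ρ l (v s) (p s)) s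
      ≤ (4 * B - 2 * ρ) * modalEnergy ρ l (v s) (p s) := by
  set e := modalEnergy ρ l (v s) (p s)
  calc deriv (fun s ↦ modalEnergy ρ l (v s) (p s)) s
      ≤ 4 * √e * |h| - 2 * ρ * e := deriv_modalEnergy_le hρl hv hp
    _ ≤ 4 * √e * (B * √e) - 2 * ρ * e := by gcongr
    _ = 4 * B * √e ^ 2 - 2 * ρ * e := by ring
    _ = (4 * B - 2 * ρ) * e := by rw [sq_sqrt (modalEnergy_nonneg _ _ _ _), sub_mul]

theorem isBigO_exp_neg_of_perturbed_linear {v p h : ℝ → ℝ} (hρ : 0 < ρ) (hρl : ρ < l)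
    (hc : 0 < c) (hv : ∀ᶠ s in atTop, HasDerivAt v (p s) s)
    (hp : ∀ᶠ s in atTop, HasDerivAt p (h s - (ρ + l) * p s - ρ * l * v s) s)
    (hh : h =O[atTop] fun s ↦ (exp (-c * s) + |v s|) * (|v s| + |p s|))
    (hv₀ : Tendsto v atTop (𝓝 0)) : v =O[atTop] fun s ↦ exp (-ρ * s) := by
  let E : ℝ → ℝ := fun s ↦ modalEnergy ρ l (v s) (p s)
  obtain ⟨K, hvpE⟩ : ∃ K, ∀ s, |v s| + |p s| ≤ K * √(E s) := by
    refine ⟨(2 + |l| + |ρ|) / (l - ρ), fun s ↦ ?_⟩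
    rw [div_mul_eq_mul_div, le_div_iff₀' (sub_pos.2 hρl)]
    simpa only [abs_of_pos (sub_pos.2 hρl)] using
      abs_sub_mul_abs_add_abs_le_sqrt_modalEnergy ρ l (v s) (p s)
  have hvE : v =O[atTop] fun s ↦ √(E s) := .of_bound K <| .of_forall fun s ↦ by
    rw [norm_eq_abs, norm_eq_abs, abs_of_nonneg (sqrt_nonneg (E s))]
    exact (le_add_of_nonneg_right (abs_nonneg _)).trans (hvpE s)
  obtain ⟨A, hA, hhA⟩ := hh.exists_pos
  let g : ℝ → ℝ := fun s ↦ 4 * (A * K * (exp (-c * s) + |v s|))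
  have hg₀ : Tendsto g atTop (𝓝 0) := by
    simpa only [g, abs_zero, add_zero, mul_zero] using
      (((tendsto_exp_neg_mul_atTop hc).add hv₀.abs).const_mul (A * K)).const_mul 4
  have hg : g =O[atTop] fun s ↦ exp (-c * s) + √(E s) := by
    refine .const_mul_left (.const_mul_left
      (((isBigO_refl _ _).add_add hvE.abs_left).congr_right fun s ↦ ?_) _) _
    rw [norm_eq_abs, norm_eq_abs, abs_exp, abs_of_nonneg (sqrt_nonneg (E s))]
  have hE' : ∀ᶠ s in atTop, deriv E s ≤ (g s - 2 * ρ) * E s := by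
    filter_upwards [hv, hp, hhA.bound] with s hvs hps hhs
    refine deriv_modalEnergy_le_mul hρl.le hvs hps (hhs.trans ?_)
    rw [norm_of_nonneg (by positivity)]
    calc A * ((exp (-c * s) + |v s|) * (|v s| + |p s|))
        ≤ A * ((exp (-c * s) + |v s|) * (K * √(E s))) := by
          gcongr
          exact hvpE s
      _ = A * K * (exp (-c * s) + |v s|) * √(E s) := by ring
  have hE_diff : ∀ᶠ s in atTop, DifferentiableAt ℝ E s := by
    filter_upwards [hv, hp] with s hvs hps using (hasDerivAt_modalEnergy hvs hps).differentiableAt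
  have hE : E =O[atTop] fun s ↦ exp (-(2 * ρ) * s) :=
    isBigO_exp_neg_of_deriv_le_of_isBigO_sqrt (by positivity) hc hE_diff
      (.of_forall fun s ↦ modalEnergy_nonneg _ _ _ _) hE' hg₀ hg
  simpa only [mul_div_cancel_left₀ ρ two_ne_zero] using hvE.trans (isBigO_sqrt_exp_neg_mul hE)

theorem sub_isBigO_exp_neg_of_damped_nonlinear {W P k f : ℝ → ℝ} {w : ℝ} (hρ : 0 < ρ)
    (hρl : ρ < l) (hc : 0 < c) (hf : ContDiffAt ℝ 2 f w) (hfw : f w = 0)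
    (hf' : deriv f w = ρ * l) (hk : k =O[atTop] fun s ↦ exp (-c * s))
    (hW : ∀ᶠ s in atTop, HasDerivAt W (P s) s)
    (hP : ∀ᶠ s in atTop, HasDerivAt P (k s * P s - (ρ + l) * P s - f (W s)) s)
    (hlim : Tendsto W atTop (𝓝 w)) : (fun s ↦ W s - w) =O[atTop] fun s ↦ exp (-ρ * s) := by
  let R : ℝ → ℝ := fun x ↦ f x - f w - (x - w) • deriv f w
  have hR : (fun s ↦ R (W s)) =O[atTop] fun s ↦ |W s - w| * |W s - w| :=
    ((isBigO_sub_sub_smul_deriv_of_contDiffAt_two hf).comp_tendsto hlim).congr_right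
      fun s ↦ by simp [← sq]
  refine isBigO_exp_neg_of_perturbed_linear (p := P) (h := fun s ↦ k s * P s - R (W s)) hρ hρl hc
    (hW.mono fun s hs ↦ hs.sub_const w) ?_ ?_ (tendsto_sub_nhds_zero_iff.2 hlim)
  · filter_upwards [hP] with s hs
    refine hs.congr_deriv ?_
    simp only [R, hfw, hf', smul_eq_mul]
    ring
  · have h_damping : (fun s ↦ k s * P s) =O[atTop]
        fun s ↦ (exp (-c * s) + |W s - w|) * (|W s - w| + |P s|) := by
      refine (hk.trans (.of_norm_le fun s ↦ ?_)).mul (.of_norm_le fun s ↦ ?_)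
      · rw [norm_eq_abs, abs_exp]
        exact le_add_of_nonneg_right (abs_nonneg _)
      · exact le_add_of_nonneg_left (abs_nonneg _)
    have h_remainder : (fun s ↦ |W s - w| * |W s - w|) =O[atTop]
        fun s ↦ (exp (-c * s) + |W s - w|) * (|W s - w| + |P s|) := by
      refine .mul (.of_norm_le fun s ↦ ?_) (.of_norm_le fun s ↦ ?_)
      · rw [norm_eq_abs, abs_abs]
        exact le_add_of_nonneg_left (exp_pos _).le
      · rw [norm_eq_abs, abs_abs]
        exact le_add_of_nonneg_right (abs_nonneg _)
    exact h_damping.sub (hR.trans h_remainder)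

end SecondOrder

section EmdenFowler

/-- The Emden–Fowler transform of `u` of weight `m`: the function `r ^ m * u r` in the logarithmic
variable `s = -log r`, so that `r → 0+` becomes `s → ∞`. -/
noncomputable def emdenFowler (m : ℝ) (u : ℝ → ℝ) (s : ℝ) : ℝ := exp (-s) ^ m * u (exp (-s))

variable {m : ℝ} {u : ℝ → ℝ}

theorem emdenFowler_neg_log {r : ℝ} (hr : 0 < r) : emdenFowler m u (-log r) = r ^ m * u r := by
  rw [emdenFowler, neg_neg, exp_log hr]

theorem tendsto_emdenFowler_atTop {L : ℝ} (h : Tendsto (fun r ↦ r ^ m * u r) (𝓝[>] 0) (𝓝 L)) :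
    Tendsto (emdenFowler m u) atTop (𝓝 L) :=
  h.comp (tendsto_exp_atBot_nhdsGT.comp tendsto_neg_atTop_atBot)

theorem continuous_emdenFowler (hu : ContinuousOn u (Ioi 0)) : Continuous (emdenFowler m u) :=
  ((continuous_exp.comp continuous_neg).rpow_const fun s ↦ .inl (exp_pos (-s)).ne').mul
    (hu.comp_continuous (continuous_exp.comp continuous_neg) fun s ↦ exp_pos (-s))

theorem hasDerivAt_emdenFowler {s : ℝ} (hu : DifferentiableAt ℝ u (exp (-s))) :
    HasDerivAt (emdenFowler m u)
      (-(m * emdenFowler m u s + emdenFowler (m + 1) (deriv u) s)) s := by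
  have hr : exp (-s) ≠ 0 := (exp_pos _).ne'
  have h_exp : HasDerivAt (fun s ↦ exp (-s)) (-exp (-s)) s := by
    simpa only [mul_neg_one] using (hasDerivAt_neg s).exp
  have h := (h_exp.rpow_const (p := m) (.inl hr)).mul (hu.hasDerivAt.comp s h_exp)
  refine h.congr_deriv ?_
  simp only [emdenFowler, rpow_add_one hr, rpow_sub_one hr, Function.comp_apply]
  field

theorem differentiable_emdenFowler (hu : DifferentiableOn ℝ u (Ioi 0)) :
    Differentiable ℝ (emdenFowler m u) := fun _ ↦
  (hasDerivAt_emdenFowler (hu.differentiableAt (Ioi_mem_nhds (exp_pos _)))).differentiableAt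

theorem deriv_emdenFowler (hu : DifferentiableOn ℝ u (Ioi 0)) :
    deriv (emdenFowler m u) =
      fun s ↦ -(m * emdenFowler m u s + emdenFowler (m + 1) (deriv u) s) :=
  funext fun _ ↦ (hasDerivAt_emdenFowler (hu.differentiableAt (Ioi_mem_nhds (exp_pos _)))).deriv

theorem hasDerivAt_deriv_emdenFowler (hu : DifferentiableOn ℝ u (Ioi 0)) {s : ℝ}
    (hu' : DifferentiableAt ℝ (deriv u) (exp (-s))) :
    HasDerivAt (deriv (emdenFowler m u)) (m ^ 2 * emdenFowler m u s
      + (2 * m + 1) * emdenFowler (m + 1) (deriv u) s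
      + emdenFowler (m + 2) (deriv (deriv u)) s) s := by
  rw [deriv_emdenFowler hu]
  have h := (hasDerivAt_emdenFowler (m := m)
    (hu.differentiableAt (Ioi_mem_nhds (exp_pos (-s))))).const_mul m
  refine (h.add (hasDerivAt_emdenFowler hu')).neg.congr_deriv ?_
  rw [add_assoc m, one_add_one_eq_two]
  ring

theorem hasDerivAt_deriv_emdenFowler_of_ode {N a α : ℝ} (hα : 0 < α)
    (hu : ContDiffOn ℝ 2 u (Ioi 0))
    (hode : ∀ r : ℝ, 0 < r →
      deriv (deriv u) r + ((N - 1) / r + a * r / 2) * deriv u r + a / α * u r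
        + |u r| ^ α * u r = 0) (s : ℝ) :
    HasDerivAt (deriv (emdenFowler (2 / α) u))
      (a / 2 * exp (-2 * s) * deriv (emdenFowler (2 / α) u) s
        - (2 * (2 / α) - (N - 2)) * deriv (emdenFowler (2 / α) u) s
        - (|emdenFowler (2 / α) u s| ^ α * emdenFowler (2 / α) u s
          - 2 / α * (N - 2 - 2 / α) * emdenFowler (2 / α) u s)) s := by
  have hu₁ : DifferentiableOn ℝ u (Ioi 0) := hu.differentiableOn two_ne_zero
  have hu₂ : DifferentiableOn ℝ (deriv u) (Ioi 0) :=
    (hu.deriv_of_isOpen (m := 1) isOpen_Ioi (by norm_num)).differentiableOn one_ne_zero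
  refine (hasDerivAt_deriv_emdenFowler hu₁
    (hu₂.differentiableAt (Ioi_mem_nhds (exp_pos (-s))))).congr_deriv ?_
  have hr := exp_pos (-s)
  have h_exp : exp (-2 * s) = exp (-s) ^ 2 := by
    rw [← exp_nat_mul]
    push_cast
    ring_nf
  have h_pow : |emdenFowler (2 / α) u s| ^ α = exp (-s) ^ 2 * |u (exp (-s))| ^ α := by
    rw [emdenFowler, abs_mul, mul_rpow (abs_nonneg _) (abs_nonneg _), abs_of_pos (by positivity),
      ← rpow_mul hr.le, div_mul_cancel₀ _ hα.ne', rpow_two]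
  have hode_s := hode _ hr
  rw [deriv_emdenFowler hu₁, h_pow, h_exp]
  simp only [emdenFowler, rpow_add hr, rpow_one, rpow_two]
  generalize exp (-s) ^ (2 / α) = A
  generalize |u (exp (-s))| ^ α = X at *
  generalize exp (-s) = r at *
  field_simp at hode_s ⊢
  linear_combination (A * r * α) * hode_s

theorem exists_abs_rpow_mul_sub_le_of_isBigO_emdenFowler {ρ w : ℝ}
    (hu : ContinuousOn u (Ioi 0))
    (h : (fun s ↦ emdenFowler m u s - w) =O[atTop] fun s ↦ exp (-ρ * s)) :
    ∃ C, ∀ r : ℝ, 0 < r → r ≤ 1 → |r ^ m * u r - w| ≤ C * r ^ ρ := by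
  have h_cont : Continuous fun s ↦ emdenFowler m u s - w :=
    (continuous_emdenFowler hu).sub continuous_const
  obtain ⟨C, hC⟩ := isBigO_principal.1 <| isBigO_principal_Ici_of_isBigO_atTop (a := 0) h_cont
    (by fun_prop) (fun s ↦ (exp_pos _).ne') h
  refine ⟨C, fun r hr hr1 ↦ ?_⟩
  have hs : -log r ∈ Ici 0 := neg_nonneg.2 (log_nonpos hr.le hr1)
  have h_exp : exp (-ρ * -log r) = r ^ ρ := by rw [neg_mul_neg, mul_comm, rpow_def_of_pos hr]
  simpa only [emdenFowler_neg_log hr, norm_eq_abs, abs_of_pos (rpow_pos_of_pos hr ρ), h_exp] using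
    hC _ hs

end EmdenFowler

section PowerNonlinearity

variable {α β w : ℝ}

theorem contDiffAt_abs_rpow_mul_sub (hw : w ≠ 0) :
    ContDiffAt ℝ 2 (fun x ↦ |x| ^ α * x - β * x) w :=
  (((contDiffAt_abs hw).rpow_const_of_ne (abs_ne_zero.2 hw)).mul contDiffAt_id).sub
    (contDiffAt_const.mul contDiffAt_id)

theorem hasDerivAt_abs_rpow_mul_sub (hw : w ≠ 0) :
    HasDerivAt (fun x ↦ |x| ^ α * x - β * x) ((α + 1) * |w| ^ α - β) w := by
  have h := (((hasDerivAt_abs hw).rpow_const (p := α) (.inl (abs_ne_zero.2 hw))).mul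
    (hasDerivAt_id w)).sub ((hasDerivAt_id w).const_mul β)
  refine h.congr_deriv ?_
  have h_sign : (SignType.sign w : ℝ) * w = |w| := sign_mul_self w
  have h_pow : |w| ^ (α - 1) * |w| = |w| ^ α := by
    rw [← rpow_add_one (abs_ne_zero.2 hw), sub_add_cancel]
  simp only [id_eq]
  linear_combination (α * |w| ^ (α - 1)) * h_sign + α * h_pow

end PowerNonlinearity

section Exponents

theorem sub_sqrt_sq_sub_pos {b c : ℝ} (hb : 0 < b) (hc : 0 < c) : 0 < b - √(b ^ 2 - c) :=
  sub_pos.2 ((sqrt_lt' hb).2 (sub_lt_self _ hc))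

theorem sub_sqrt_mul_add_sqrt_sq_sub {b c : ℝ} (h : c ≤ b ^ 2) :
    (b - √(b ^ 2 - c)) * (b + √(b ^ 2 - c)) = c := by
  rw [mul_comm, ← sq_sub_sq, sq_sqrt (sub_nonneg.2 h), sub_sub_cancel]

variable {N α : ℝ}

theorem half_sub_two_add_sqrt_lt_two_div (hN : 2 < N) (hα : 0 < α)
    (h : α < 4 / (N - 4 + 2 * √(N - 1))) : N / 2 - 2 + √(N - 1) < 2 / α := by
  have h_sqrt : 1 < √(N - 1) := lt_sqrt_of_sq_lt (by linarith)
  have h_den : 0 < N - 4 + 2 * √(N - 1) := by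
    nlinarith [sq_sqrt (show 0 ≤ N - 1 by linarith)]
  rw [lt_div_iff₀ h_den] at h
  rw [lt_div_iff₀ hα]
  linarith

theorem exists_characteristic_exponent {β ρ : ℝ} (hN : 2 < N) (hα : 0 < α) (hβ₀ : 0 < β)
    (hα' : α < 4 / (N - 4 + 2 * √(N - 1))) (hβ : β = 2 / α * (N - 2 - 2 / α))
    (hρ : ρ = 2 / α - (N - 2) / 2 - √((N - 2) ^ 2 / 4 - β * (α + 1))) :
    ∃ l, 0 < ρ ∧ ρ < l ∧ ρ + l = 2 * (2 / α) - (N - 2) ∧ ρ * l = α * β := by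
  have h_lt := half_sub_two_add_sqrt_lt_two_div hN hα hα'
  have h_sqrt : 1 < √(N - 1) := lt_sqrt_of_sq_lt (by linarith)
  have hαβ : α * β = 2 * (N - 2 - 2 / α) := by
    rw [hβ]
    field
  obtain ⟨b, hb⟩ : ∃ b, b = 2 / α - (N - 2) / 2 := ⟨_, rfl⟩
  have h_disc : (N - 2) ^ 2 / 4 - β * (α + 1) = b ^ 2 - α * β := by
    rw [hb]
    linear_combination (-1 : ℝ) * hβ
  have hb_pos : 0 < b := by linarith
  have h_disc_pos : α * β < b ^ 2 := by
    nlinarith [sq_sqrt (show 0 ≤ N - 1 by linarith)]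
  rw [h_disc, ← hb] at hρ
  refine ⟨b + √(b ^ 2 - α * β), ?_, ?_, ?_, ?_⟩
  · exact hρ ▸ sub_sqrt_sq_sub_pos hb_pos (mul_pos hα hβ₀)
  · linarith [sqrt_pos.2 (sub_pos.2 h_disc_pos)]
  · rw [hρ, hb]
    ring
  · exact hρ ▸ sub_sqrt_mul_add_sqrt_sq_sub h_disc_pos.le

end Exponents

theorem stmt_17_general (N α α₀ β ρ : ℝ) (hN : 2 < N)
    (hα₀ : α₀ = 4 / (N - 4 + 2 * √(N - 1)))
    (hα1 : 2 / (N - 2) < α) (hα2 : α < α₀)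
    (hβ : β = 2 / α * (N - 2 - 2 / α))
    (hρ : ρ = 2 / α - (N - 2) / 2 - √((N - 2) ^ 2 / 4 - β * (α + 1)))
    (a : ℝ) (u : ℝ → ℝ) (hu : ContDiffOn ℝ 2 u (Ioi 0))
    (hode : ∀ r : ℝ, 0 < r →
      deriv (deriv u) r + ((N - 1) / r + a * r / 2) * deriv u r + a / α * u r
        + |u r| ^ α * u r = 0)
    (hlim : Tendsto (fun r : ℝ ↦ r ^ (2 / α) * u r) (𝓝[>] 0) (𝓝 (β ^ (1 / α)))) :
    ∃ C : ℝ, ∀ r : ℝ, 0 < r → r ≤ 1 → |r ^ (2 / α) * u r - β ^ (1 / α)| ≤ C * r ^ ρ := by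
  have hN' : 0 < N - 2 := sub_pos.2 hN
  have hα : 0 < α := (div_pos two_pos hN').trans hα1
  have hβ₀ : 0 < β := hβ ▸ mul_pos (div_pos two_pos hα) (sub_pos.2 ((div_lt_comm₀ hN' hα).1 hα1))
  obtain ⟨l, hρ₀, hρl, hsum, hprod⟩ := exists_characteristic_exponent hN hα hβ₀ (hα₀ ▸ hα2) hβ hρ
  have hw : β ^ (1 / α) ≠ 0 := (rpow_pos_of_pos hβ₀ _).ne'
  have hwα : |β ^ (1 / α)| ^ α = β := by
    rw [abs_of_pos (rpow_pos_of_pos hβ₀ _), one_div, rpow_inv_rpow hβ₀.le hα.ne']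
  refine exists_abs_rpow_mul_sub_le_of_isBigO_emdenFowler hu.continuousOn ?_
  refine sub_isBigO_exp_neg_of_damped_nonlinear (f := fun x ↦ |x| ^ α * x - β * x)
    (k := fun s ↦ a / 2 * exp (-2 * s)) (P := deriv (emdenFowler (2 / α) u)) hρ₀ hρl two_pos
    (contDiffAt_abs_rpow_mul_sub hw) (by rw [hwα, sub_self]) ?_
    ((isBigO_refl _ _).const_mul_left _) (.of_forall fun s ↦ ?_) (.of_forall fun s ↦ ?_)
    (tendsto_emdenFowler_atTop hlim)
  · rw [(hasDerivAt_abs_rpow_mul_sub hw).deriv, hwα, hprod]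
    ring
  · exact (differentiable_emdenFowler (hu.differentiableOn two_ne_zero) s).hasDerivAt
  · rw [hsum, hβ]
    exact hasDerivAt_deriv_emdenFowler_of_ode hα hu hode s

theorem stmt_17 (N : ℕ) (hN : 3 ≤ N) (α α₀ β ρ : ℝ)
    (hα₀ : α₀ = 4 / ((N : ℝ) - 4 + 2 * Real.sqrt ((N : ℝ) - 1)))
    (hα1 : 2 / ((N : ℝ) - 2) < α) (hα2 : α < α₀)
    (hβ : β = 2 / α * ((N : ℝ) - 2 - 2 / α))
    (hρ : ρ = 2 / α - ((N : ℝ) - 2) / 2 - Real.sqrt (((N : ℝ) - 2) ^ 2 / 4 - β * (α + 1)))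
    (a : ℝ) (u : ℝ → ℝ) (huC2 : ContDiffOn ℝ 2 u (Set.Ioi 0))
    (huode : ∀ r : ℝ, 0 < r →
      deriv (deriv u) r + (((N : ℝ) - 1) / r + a * r / 2) * deriv u r + a / α * u r
        + |u r| ^ α * u r = 0)
    (hulim : Tendsto (fun r : ℝ => r ^ (2 / α) * u r)
      (nhdsWithin 0 (Set.Ioi 0)) (nhds (β ^ (1 / α)))) :
    ∃ C : ℝ, ∀ r : ℝ, 0 < r → r ≤ 1 →
      |r ^ (2 / α) * u r - β ^ (1 / α)| ≤ C * r ^ ρ :=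
  stmt_17_general N α α₀ β ρ (by exact_mod_cast hN) hα₀ hα1 hα2 hβ hρ a u huC2 huode hulim
end
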